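/- arXiv:2307.07672 — 3 statements merged into one kernel-verified Lean document; each statement's English description precedes it below -/
import Mathlib

section
/- Let Ω be a nonempty finite set, p a full-support probability vector on Ω, n ≥ 1, and for each ω ∈ Ω let v^ω : Δ(Ω)^n → ℝ be bounded and upper semicontinuous. Then the supremum defining the value of the persuasion problem is attained: there exists a feasible collection (μ^ω)_{ω∈Ω} of conditional belief distributions for prior p such that ∑_{ω∈Ω} p(ω)·∫ v^ω dμ^ω = Val. -/
open MeasureTheory

noncomputable section

abbrev Belief (Ω : Type) [Fintype Ω] : Type := stdSimplex ℝ Ω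

variable {Ω : Type} [Fintype Ω] [MeasurableSpace Ω] [MeasurableSingletonClass Ω]

/-- The joint distribution of state and beliefs. -/
def jointP (p : Ω → ℝ) {X : Type} [MeasurableSpace X] (μ : Ω → Measure X) :
    Measure (Ω × X) :=
  ∑ ω : Ω, ENNReal.ofReal (p ω) • ((Measure.dirac ω).prod (μ ω))

/-- Feasibility of a collection of conditional belief distributions, n receivers. -/
def Feasible (p : Ω → ℝ) (n : ℕ) (μ : Ω → Measure (Fin n → Belief Ω)) : Prop :=
  (∀ ω, IsProbabilityMeasure (μ ω)) ∧
  ∀ (i : Fin n) (ω' : Ω),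
    (fun z : Ω × (Fin n → Belief Ω) => (z.2 i).1 ω')
      =ᵐ[jointP p μ]
      (jointP p μ)[Set.indicator {z : Ω × (Fin n → Belief Ω) | z.1 = ω'} (fun _ => (1 : ℝ)) |
        MeasurableSpace.comap (fun z : Ω × (Fin n → Belief Ω) => z.2 i) inferInstance]

/-- Feasibility of a collection of conditional belief distributions, single receiver. -/
def Feasible1 (p : Ω → ℝ) (lam : Ω → Measure (Belief Ω)) : Prop :=
  (∀ ω, IsProbabilityMeasure (lam ω)) ∧
  ∀ ω' : Ω,
    (fun z : Ω × Belief Ω => (z.2).1 ω')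
      =ᵐ[jointP p lam]
      (jointP p lam)[Set.indicator {z : Ω × Belief Ω | z.1 = ω'} (fun _ => (1 : ℝ)) |
        MeasurableSpace.comap (fun z : Ω × Belief Ω => z.2) inferInstance]

/-- the value of the persuasion problem -/
def Val (p : Ω → ℝ) (n : ℕ) (v : Ω → (Fin n → Belief Ω) → ℝ) : ℝ :=
  sSup { r | ∃ μ : Ω → Measure (Fin n → Belief Ω),
    Feasible p n μ ∧ r = ∑ ω : Ω, p ω * ∫ x, v ω x ∂(μ ω) }

end

/-!
Compactness and semicontinuity. The families `ω ↦ μ ω` of Borel probability measures on the compact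
space `Δ(Ω)ⁿ` form a compact space in the weak topology. Testing the conditional expectation given
the `i`-th belief against bounded continuous functions `f` turns feasibility into the equations
`∑ ω, p ω * ∫ f(xᵢ) xᵢ(ω') dμ ω = p ω' * ∫ f(xᵢ) dμ ω'`, whose two sides are weakly continuous, so
the feasible families form a compact set; it contains the family of Dirac masses at the prior (no
information). By the layer-cake formula, the portmanteau theorem for open sets and Fatou's lemma,
`μ ↦ ∫ g dμ` is lower semicontinuous for `g ≥ 0` lower semicontinuous; applied to `C - v ω` this
makes the objective upper semicontinuous, and it attains its maximum.
-/

open Filter Topology TopologicalSpace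
open scoped ENNReal BoundedContinuousFunction

section WeakSemicontinuity

variable {X : Type*} [TopologicalSpace X] [MeasurableSpace X]

lemma lowerSemicontinuous_measure_of_isOpen [OpensMeasurableSpace X] [HasOuterApproxClosed X]
    {U : Set X} (hU : IsOpen U) :
    LowerSemicontinuous fun μ : ProbabilityMeasure X => (μ : Measure X) U :=
  lowerSemicontinuous_iff_le_liminf.2 fun _ =>
    ProbabilityMeasure.le_liminf_measure_open_of_tendsto tendsto_id hU

lemma lowerSemicontinuous_lintegral {Y T : Type*} [TopologicalSpace Y] [FirstCountableTopology Y]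
    [MeasurableSpace T] {ν : Measure T} {F : Y → T → ℝ≥0∞} (hF : ∀ y, Measurable (F y))
    (hlsc : ∀ t, LowerSemicontinuous fun y => F y t) :
    LowerSemicontinuous fun y => ∫⁻ t, F y t ∂ν := by
  refine lowerSemicontinuous_iff_frequently.2 fun y c hc => ?_
  obtain ⟨u, hu, huc⟩ := exists_seq_forall_of_frequently hc
  have hpt : ∀ t, F y t ≤ liminf (fun k => F (u k) t) atTop := fun t =>
    (lowerSemicontinuous_iff_le_liminf.1 (hlsc t) y).trans hu.liminf_le_liminf_comp
  calc ∫⁻ t, F y t ∂ν ≤ ∫⁻ t, liminf (fun k => F (u k) t) atTop ∂ν := lintegral_mono hpt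
    _ ≤ liminf (fun k => ∫⁻ t, F (u k) t ∂ν) atTop := lintegral_liminf_le fun k => hF (u k)
    _ ≤ c := liminf_le_of_frequently_le' (Frequently.of_forall huc)

variable [PseudoMetrizableSpace X] [SeparableSpace X] [BorelSpace X]

lemma lowerSemicontinuous_lintegral_ofReal {g : X → ℝ} (hg : LowerSemicontinuous g)
    (hg0 : 0 ≤ g) :
    LowerSemicontinuous fun μ : ProbabilityMeasure X =>
      ∫⁻ x, ENNReal.ofReal (g x) ∂(μ : Measure X) := by
  have layerCake : ∀ μ : ProbabilityMeasure X, ∫⁻ x, ENNReal.ofReal (g x) ∂(μ : Measure X) =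
      ∫⁻ t in Set.Ioi (0 : ℝ), (μ : Measure X) {x | t < g x} := fun μ =>
    lintegral_eq_lintegral_meas_lt _ (Eventually.of_forall hg0) hg.measurable.aemeasurable
  simp only [layerCake]
  refine lowerSemicontinuous_lintegral (fun μ => Antitone.measurable fun s t hst => ?_) fun t =>
    lowerSemicontinuous_measure_of_isOpen (hg.isOpen_preimage t)
  exact measure_mono fun x hx => hst.trans_lt hx

lemma lowerSemicontinuous_of_ofReal {Y : Type*} [TopologicalSpace Y] {h : Y → ℝ} (h0 : 0 ≤ h)
    (hh : LowerSemicontinuous fun y => ENNReal.ofReal (h y)) : LowerSemicontinuous h := by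
  refine lowerSemicontinuous_iff_frequently.2 fun y c hc => ?_
  obtain ⟨y', hy'⟩ := hc.exists
  exact (ENNReal.ofReal_le_ofReal_iff ((h0 y').trans hy')).1 <|
    lowerSemicontinuous_iff_frequently.1 hh y _ (hc.mono fun _ => ENNReal.ofReal_le_ofReal)

lemma lowerSemicontinuous_integral_of_nonneg {g : X → ℝ} {C : ℝ} (hg : LowerSemicontinuous g)
    (hg0 : 0 ≤ g) (hgC : ∀ x, g x ≤ C) :
    LowerSemicontinuous fun μ : ProbabilityMeasure X => ∫ x, g x ∂(μ : Measure X) := by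
  refine lowerSemicontinuous_of_ofReal (fun μ => integral_nonneg hg0) ?_
  have g_integrable : ∀ μ : ProbabilityMeasure X, Integrable g (μ : Measure X) := fun μ =>
    Integrable.of_bound hg.measurable.aestronglyMeasurable C
      (Eventually.of_forall fun x => (Real.norm_of_nonneg (hg0 x)).trans_le (hgC x))
  simpa only [fun μ => ofReal_integral_eq_lintegral_ofReal (g_integrable μ)
    (Eventually.of_forall hg0)] using lowerSemicontinuous_lintegral_ofReal hg hg0

lemma upperSemicontinuous_integral {v : X → ℝ} {C : ℝ} (hv : UpperSemicontinuous v)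
    (hC : ∀ x, |v x| ≤ C) :
    UpperSemicontinuous fun μ : ProbabilityMeasure X => ∫ x, v x ∂(μ : Measure X) := by
  have gap_lsc : LowerSemicontinuous fun x => C - v x :=
    (continuous_const.sub continuous_id).comp_upperSemicontinuous_antitone hv antitone_const_tsub
  have gap_integral_lsc := lowerSemicontinuous_integral_of_nonneg (C := C + C) gap_lsc
    (fun x => sub_nonneg.2 (le_of_abs_le (hC x))) fun x => by linarith [neg_le_of_abs_le (hC x)]
  have integral_eq : ∀ μ : ProbabilityMeasure X,
      ∫ x, v x ∂(μ : Measure X) = C - ∫ x, (C - v x) ∂(μ : Measure X) := fun μ => by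
    rw [integral_sub (integrable_const C) (Integrable.of_bound
      hv.measurable.aestronglyMeasurable C (Eventually.of_forall hC)), integral_const,
      probReal_univ, one_smul, sub_sub_cancel]
  simp only [integral_eq]
  exact (continuous_const.sub continuous_id).comp_lowerSemicontinuous_antitone gap_integral_lsc
    antitone_const_tsub

lemma upperSemicontinuous_sum_mul_integral {ι : Type*} [Fintype ι] {w C : ι → ℝ} {v : ι → X → ℝ}
    (hw : ∀ i, 0 ≤ w i) (hv : ∀ i, UpperSemicontinuous (v i)) (hC : ∀ i x, |v i x| ≤ C i) :
    UpperSemicontinuous fun μ : ι → ProbabilityMeasure X =>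
      ∑ i, w i * ∫ x, v i x ∂(μ i : Measure X) :=
  upperSemicontinuous_sum fun i _ =>
    (continuous_const_mul (w i)).comp_upperSemicontinuous
      ((upperSemicontinuous_integral (hv i) (hC i)).comp (continuous_apply i))
      (monotone_mul_left_of_nonneg (hw i))

end WeakSemicontinuity

section CondExpComap

variable {Z B : Type*} [MeasurableSpace Z] {P : Measure Z} [TopologicalSpace B]
  [MeasurableSpace B] {q : Z → B}

lemma integral_withDensity_ofReal {φ : Z → ℝ} (hφ : AEMeasurable φ P) (g : Z → ℝ) :
    ∫ z, g z ∂(P.withDensity fun z => ENNReal.ofReal (φ z)) = ∫ z, g z * max (φ z) 0 ∂P := by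
  rw [integral_withDensity_eq_integral_toReal_smul₀ hφ.ennreal_ofReal
    (Eventually.of_forall fun _ => ENNReal.ofReal_lt_top)]
  exact integral_congr_ae (Eventually.of_forall fun z => by
    simp only [ENNReal.toReal_ofReal', smul_eq_mul, mul_comm])

lemma integrable_boundedContinuous_comp_mul [OpensMeasurableSpace B] (f : B →ᵇ ℝ)
    (hq : Measurable q) {φ : Z → ℝ} (hφ : Integrable φ P) : Integrable (fun z => f (q z) * φ z) P :=
  hφ.bdd_mul (f.continuous.measurable.comp hq).aestronglyMeasurable
    (Eventually.of_forall fun z => f.norm_coe_le_norm (q z))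

variable [BorelSpace B] [HasOuterApproxClosed B]

lemma setIntegral_preimage_eq_zero_of_forall_integral_mul_eq_zero (hq : Measurable q)
    {φ : Z → ℝ} (hφ : Integrable φ P) (h : ∀ f : B →ᵇ ℝ, ∫ z, f (q z) * φ z ∂P = 0) {A : Set B}
    (hA : MeasurableSet A) : ∫ z in q ⁻¹' A, φ z ∂P = 0 := by
  have hneg : Integrable (fun z => -φ z) P := hφ.neg
  have := isFiniteMeasure_withDensity_ofReal hφ.2
  have := isFiniteMeasure_withDensity_ofReal hneg.2
  have hpos_eq_neg : (P.withDensity fun z => ENNReal.ofReal (φ z)).map q =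
      (P.withDensity fun z => ENNReal.ofReal (-φ z)).map q := by
    refine ext_of_forall_integral_eq_of_IsFiniteMeasure fun f => ?_
    have hf := f.continuous.measurable
    rw [integral_map hq.aemeasurable hf.aestronglyMeasurable,
      integral_map hq.aemeasurable hf.aestronglyMeasurable,
      integral_withDensity_ofReal hφ.aemeasurable,
      integral_withDensity_ofReal hneg.aemeasurable, ← sub_eq_zero,
      ← integral_sub (integrable_boundedContinuous_comp_mul f hq hφ.pos_part)
        (integrable_boundedContinuous_comp_mul f hq hφ.neg_part)]
    simpa only [← mul_sub, max_zero_sub_max_neg_zero_eq_self] using h f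
  have hlint : ∫⁻ z in q ⁻¹' A, ENNReal.ofReal (φ z) ∂P =
      ∫⁻ z in q ⁻¹' A, ENNReal.ofReal (-φ z) ∂P := by
    simpa only [Measure.map_apply hq hA, withDensity_apply _ (hq hA)] using
      congrArg (fun ν : Measure B => ν A) hpos_eq_neg
  rw [integral_eq_lintegral_pos_part_sub_lintegral_neg_part hφ.restrict, hlint, sub_self]

lemma ae_eq_condExp_comap_iff [IsFiniteMeasure P] (hq : Measurable q)
    {h : B → ℝ} (hh : Measurable h) (hhq : Integrable (fun z => h (q z)) P) {ψ : Z → ℝ}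
    (hψ : Integrable ψ P) :
    (fun z => h (q z)) =ᵐ[P] P[ψ | MeasurableSpace.comap q inferInstance] ↔
      ∀ f : B →ᵇ ℝ, ∫ z, f (q z) * h (q z) ∂P = ∫ z, f (q z) * ψ z ∂P := by
  have hle := hq.comap_le
  have hcomp : ∀ {k : B → ℝ}, Measurable k →
      StronglyMeasurable[MeasurableSpace.comap q inferInstance] fun z => k (q z) := fun hk =>
    (hk.comp (comap_measurable q)).stronglyMeasurable
  refine ⟨fun hae f => ?_, fun htest => ?_⟩
  · have pullOut := condExp_stronglyMeasurable_mul_of_bound hle (hcomp f.continuous.measurable) hψ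
      ‖f‖ (Eventually.of_forall fun z => f.norm_coe_le_norm (q z))
    calc ∫ z, f (q z) * h (q z) ∂P
        = ∫ z, (P[(fun z => f (q z)) * ψ | MeasurableSpace.comap q inferInstance]) z ∂P :=
          integral_congr_ae <| by
            filter_upwards [hae, pullOut] with z hz hz'
            rw [hz', Pi.mul_apply, hz]
      _ = ∫ z, f (q z) * ψ z ∂P := integral_condExp hle
  · refine ae_eq_condExp_of_forall_setIntegral_eq hle hψ (fun _ _ _ => hhq.integrableOn) ?_
      (hcomp hh).aestronglyMeasurable
    rintro _ ⟨A, hA, rfl⟩ -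
    rw [← sub_eq_zero, ← integral_sub hhq.integrableOn hψ.integrableOn]
    refine setIntegral_preimage_eq_zero_of_forall_integral_mul_eq_zero hq (hhq.sub hψ)
      (fun f => ?_) hA
    simp only [Pi.sub_apply, mul_sub]
    rw [integral_sub (integrable_boundedContinuous_comp_mul f hq hhq)
      (integrable_boundedContinuous_comp_mul f hq hψ), htest f, sub_self]

end CondExpComap

section Persuasion

lemma continuous_belief_apply {Ω : Type} [Fintype Ω] (ω : Ω) :
    Continuous fun b : Belief Ω => b.1 ω :=
  (continuous_apply ω).comp continuous_subtype_val

variable {Ω : Type} [Fintype Ω] [MeasurableSpace Ω] [MeasurableSingletonClass Ω] {p : Ω → ℝ}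

instance isFiniteMeasure_jointP {X : Type} [MeasurableSpace X] (μ : Ω → Measure X)
    [∀ ω, IsFiniteMeasure (μ ω)] : IsFiniteMeasure (jointP p μ) := by
  unfold jointP
  have (ω : Ω) : IsFiniteMeasure (ENNReal.ofReal (p ω) • (Measure.dirac ω).prod (μ ω)) :=
    Measure.smul_finite _ ENNReal.ofReal_ne_top
  infer_instance

lemma integral_jointP {X : Type} [MeasurableSpace X] {μ : Ω → Measure X} [∀ ω, SFinite (μ ω)]
    (hp : ∀ ω, 0 ≤ p ω) {g : Ω × X → ℝ} (hg : ∀ ω, Integrable (fun x => g (ω, x)) (μ ω)) :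
    ∫ z, g z ∂(jointP p μ) = ∑ ω, p ω * ∫ x, g (ω, x) ∂(μ ω) := by
  have hslice : ∀ ω, Integrable g ((Measure.dirac ω).prod (μ ω)) := fun ω => by
    rw [Measure.dirac_prod]
    exact (measurableEmbedding_prodMk_left ω).integrable_map_iff.2 (hg ω)
  rw [jointP, integral_finsetSum_measure fun ω _ =>
    (hslice ω).smul_measure ENNReal.ofReal_ne_top]
  refine Finset.sum_congr rfl fun ω _ => ?_
  rw [integral_smul_measure, Measure.dirac_prod, (measurableEmbedding_prodMk_left ω).integral_map,
    ENNReal.toReal_ofReal (hp ω), smul_eq_mul]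

lemma integral_jointP_mul_indicator_fst {X : Type} [MeasurableSpace X] {μ : Ω → Measure X}
    [∀ ω, SFinite (μ ω)] (hp : ∀ ω, 0 ≤ p ω) {ω' : Ω} {g : X → ℝ} (hg : Integrable g (μ ω')) :
    ∫ z, g z.2 * Set.indicator {z : Ω × X | z.1 = ω'} (fun _ => (1 : ℝ)) z ∂(jointP p μ) =
      p ω' * ∫ x, g x ∂(μ ω') := by
  classical
  have hslice : ∀ ω x, g x * Set.indicator {z : Ω × X | z.1 = ω'} (fun _ => (1 : ℝ)) (ω, x) =
      if ω = ω' then g x else 0 := fun ω x => by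
    simp only [Set.indicator_apply, Set.mem_ofPred_eq, mul_ite, mul_one, mul_zero]
  rw [integral_jointP hp fun ω => ?_, Finset.sum_eq_single ω']
  · simp only [hslice, if_true]
  · intro ω _ hω
    simp only [hslice, if_neg hω, integral_zero, mul_zero]
  · exact fun h => absurd (Finset.mem_univ ω') h
  · rcases eq_or_ne ω ω' with rfl | hω
    · simpa only [hslice, if_true] using hg
    · simp only [hslice, if_neg hω]
      exact integrable_zero X ℝ (μ ω)

lemma feasible_iff_forall_integral_eq (hp : ∀ ω, 0 ≤ p ω) {n : ℕ}
    {μ : Ω → Measure (Fin n → Belief Ω)} [hμ : ∀ ω, IsProbabilityMeasure (μ ω)] :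
    Feasible p n μ ↔ ∀ (i : Fin n) (ω' : Ω) (f : Belief Ω →ᵇ ℝ),
      ∑ ω, p ω * ∫ x, f (x i) * (x i).1 ω' ∂(μ ω) = p ω' * ∫ x, f (x i) ∂(μ ω') := by
  have integrable_of_continuous {g : (Fin n → Belief Ω) → ℝ} (hg : Continuous g) (ω : Ω) :
      Integrable g (μ ω) :=
    hg.integrable_of_hasCompactSupport (HasCompactSupport.of_compactSpace g)
  refine (and_iff_right hμ).trans (forall₂_congr fun i ω' => ?_)
  have hcoord : Measurable fun z : Ω × (Fin n → Belief Ω) => z.2 i :=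
    (measurable_pi_apply i).comp measurable_snd
  have hstate : MeasurableSet {z : Ω × (Fin n → Belief Ω) | z.1 = ω'} :=
    measurable_fst (measurableSet_singleton ω')
  have hbelief := continuous_belief_apply ω'
  have hbelief_int : Integrable (fun z => (z.2 i).1 ω') (jointP p μ) :=
    Integrable.of_bound (hbelief.measurable.comp hcoord).aestronglyMeasurable 1
      (Eventually.of_forall fun z =>
        (Real.norm_of_nonneg ((z.2 i).2.1 ω')).trans_le (stdSimplex.le_one (z.2 i) ω'))
  rw [ae_eq_condExp_comap_iff hcoord hbelief.measurable hbelief_int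
    ((integrable_const 1).indicator hstate)]
  refine forall_congr' fun f => ?_
  have hf : Continuous fun x : Fin n → Belief Ω => f (x i) :=
    f.continuous.comp (continuous_apply i)
  rw [integral_jointP hp (integrable_of_continuous (hf.mul (hbelief.comp (continuous_apply i)))),
    integral_jointP_mul_indicator_fst hp (integrable_of_continuous hf ω')]

/-- The feasible collections for prior `p` and `n` receivers, as a subset of the compact space
`Ω → ProbabilityMeasure (Fin n → Belief Ω)` of families of laws with the weak topology. -/
def feasibleSet (p : Ω → ℝ) (n : ℕ) : Set (Ω → ProbabilityMeasure (Fin n → Belief Ω)) :=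
  {m | Feasible p n fun ω => (m ω : Measure (Fin n → Belief Ω))}

lemma isClosed_feasibleSet (hp : ∀ ω, 0 ≤ p ω) (n : ℕ) : IsClosed (feasibleSet p n) := by
  have hcont (g : C(Fin n → Belief Ω, ℝ)) (ω : Ω) :
      Continuous fun m : Ω → ProbabilityMeasure (Fin n → Belief Ω) => ∫ x, g x ∂(m ω : Measure _) :=
    (ProbabilityMeasure.continuous_integral_continuousMap g).comp (continuous_apply ω)
  simp only [feasibleSet, feasible_iff_forall_integral_eq hp, Set.ofPred_forall]
  refine isClosed_iInter fun i => isClosed_iInter fun ω' => isClosed_iInter fun f => ?_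
  have hf : Continuous fun x : Fin n → Belief Ω => f (x i) :=
    f.continuous.comp (continuous_apply i)
  have hfb := hf.mul ((continuous_belief_apply ω').comp (continuous_apply i))
  exact isClosed_eq
    (continuous_finsetSum _ fun ω _ => continuous_const.mul (hcont ⟨_, hfb⟩ ω))
    (continuous_const.mul (hcont ⟨_, hf⟩ ω'))

lemma nonempty_feasibleSet (hp : p ∈ stdSimplex ℝ Ω) (n : ℕ) : (feasibleSet p n).Nonempty := by
  refine ⟨fun _ => diracProba fun _ => ⟨p, hp⟩,
    (feasible_iff_forall_integral_eq hp.1).2 fun i ω' f => ?_⟩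
  simp only [diracProba, ProbabilityMeasure.coe_mk, integral_dirac]
  rw [← Finset.sum_mul, hp.2, one_mul, mul_comm]

theorem value_attained_general (hp : p ∈ stdSimplex ℝ Ω) {n : ℕ}
    {v : Ω → (Fin n → Belief Ω) → ℝ} (hvb : ∃ C : ℝ, ∀ ω x, |v ω x| ≤ C)
    (hvusc : ∀ ω, UpperSemicontinuous (v ω)) :
    ∃ μ : Ω → Measure (Fin n → Belief Ω), Feasible p n μ ∧
      ∑ ω : Ω, p ω * ∫ x, v ω x ∂(μ ω) = Val p n v := by
  obtain ⟨C, hC⟩ := hvb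
  have payoff_usc := upperSemicontinuous_sum_mul_integral hp.1 hvusc hC
  have feasibleSet_compact := (isClosed_feasibleSet hp.1 n).isCompact
  obtain ⟨m, hm, hmax⟩ := (payoff_usc.upperSemicontinuousOn _).exists_isMaxOn
    (nonempty_feasibleSet hp n) feasibleSet_compact
  refine ⟨fun ω => m ω, hm, Eq.symm ?_⟩
  refine IsGreatest.csSup_eq ⟨⟨_, hm, rfl⟩, ?_⟩
  rintro r ⟨μ, hμ, rfl⟩
  have hμ_mem : (fun ω => ⟨μ ω, hμ.1 ω⟩) ∈ feasibleSet p n := hμ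
  exact hmax hμ_mem

end Persuasion

/-- the supremum defining the value of the persuasion problem is attained. -/
theorem value_attained
    {Ω : Type} [Fintype Ω] [Nonempty Ω] [MeasurableSpace Ω] [MeasurableSingletonClass Ω]
    (p : Ω → ℝ) (hp : ∀ ω, 0 < p ω) (hpsum : ∑ ω : Ω, p ω = 1)
    (n : ℕ) (hn : 1 ≤ n)
    (v : Ω → (Fin n → Belief Ω) → ℝ)
    (hvb : ∃ C : ℝ, ∀ ω x, |v ω x| ≤ C)
    (hvusc : ∀ ω, UpperSemicontinuous (v ω)) :
    ∃ μ : Ω → Measure (Fin n → Belief Ω), Feasible p n μ ∧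
      ∑ ω : Ω, p ω * ∫ x, v ω x ∂(μ ω) = Val p n v :=
  value_attained_general ⟨fun ω => (hp ω).le, hpsum⟩ hvb hvusc
end

section
/- Let Ω = {ℓ, h} be a binary state space, p = p(ℓ) ∈ (0,1) the prior, n = 2 receivers, and let v^ℓ, v^h : [0,1]^2 → ℝ be bounded and upper semicontinuous (beliefs identified with the probability of state ℓ). Then the value Val of the persuasion problem equals the infimum of p·V^ℓ + (1−p)·V^h over real numbers V^ℓ, V^h and continuous functions α_1, α_2 : [0,1] → ℝ satisfying, for all x_1, x_2 ∈ [0,1]: v^ℓ(x_1,x_2) ≤ V^ℓ + (1−x_1)·α_1(x_1) + (1−x_2)·α_2(x_2) and v^h(x_1,x_2) ≤ V^h − x_1·α_1(x_1) − x_2·α_2(x_2). -/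
open MeasureTheory

noncomputable section

/-- In the binary-state case a belief is identified with the probability of state `ℓ`,
a number in `[0,1]`. -/
abbrev BeliefI : Type := Set.Icc (0 : ℝ) 1

/-- States: `true` is the low state `ℓ`, `false` is the high state `h`. -/
abbrev StateL : Bool := true
abbrev StateH : Bool := false

/-- The joint distribution of the state and the two receivers' beliefs, for prior
`p = p(ℓ)` and conditional belief distributions `μl` (given `ℓ`) and `μh` (given `h`). -/
def jointPBin (p : ℝ) (μl μh : Measure (Fin 2 → BeliefI)) :
    Measure (Bool × (Fin 2 → BeliefI)) :=
  ENNReal.ofReal p • ((Measure.dirac StateL).prod μl) +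
    ENNReal.ofReal (1 - p) • ((Measure.dirac StateH).prod μh)

/-- Feasibility of a pair of conditional belief distributions in the two-receiver
binary-state problem: conditionally on the information `σ(x_i)` of each receiver `i`,
the conditional probability of the state `ℓ` is `x_i` and of the state `h` is `1 - x_i`. -/
def FeasibleBin (p : ℝ) (μl μh : Measure (Fin 2 → BeliefI)) : Prop :=
  IsProbabilityMeasure μl ∧ IsProbabilityMeasure μh ∧
  ∀ i : Fin 2,
    ((fun z : Bool × (Fin 2 → BeliefI) => (z.2 i).1)
      =ᵐ[jointPBin p μl μh]
      (jointPBin p μl μh)[Set.indicator {z : Bool × (Fin 2 → BeliefI) | z.1 = StateL}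
          (fun _ => (1 : ℝ)) |
        MeasurableSpace.comap (fun z : Bool × (Fin 2 → BeliefI) => z.2 i) inferInstance]) ∧
    ((fun z : Bool × (Fin 2 → BeliefI) => 1 - (z.2 i).1)
      =ᵐ[jointPBin p μl μh]
      (jointPBin p μl μh)[Set.indicator {z : Bool × (Fin 2 → BeliefI) | z.1 = StateH}
          (fun _ => (1 : ℝ)) |
        MeasurableSpace.comap (fun z : Bool × (Fin 2 → BeliefI) => z.2 i) inferInstance])

/-- the value of the binary-state two-receiver persuasion problem -/
def ValBin (p : ℝ) (vl vh : (Fin 2 → BeliefI) → ℝ) : ℝ :=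
  sSup { r : ℝ | ∃ μl μh : Measure (Fin 2 → BeliefI), FeasibleBin p μl μh ∧
    r = p * ∫ x, vl x ∂μl + (1 - p) * ∫ x, vh x ∂μh }

end

/-!
A joint law `P` of the state and the beliefs is feasible exactly when it annihilates the continuous
functions `t (1_ℓ - p) + ∑ i, α i (x i) (1_ℓ - x i)`, so persuasion is a linear program over the
probability measures on a compact metrizable space. Its dual asks for the least constant `c` which,
added to such a function, majorizes `v`. There is no duality gap: separating the functions that
majorize `v - d` up to a test function from the open cone of negative functions gives a positive
functional, hence by Riesz a feasible `P`, and its value is at least `d` because an upper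
semicontinuous `v` is a decreasing limit of Lipschitz functions. The substitution
`Vl = c + t (1 - p)`, `Vh = c - t p` turns the dual constraints into those of the theorem.
-/

open Filter Topology
open scoped BoundedContinuousFunction CompactlySupported

section LipschitzEnvelope

variable {X : Type*} [PseudoMetricSpace X]

/-- The `k`-Lipschitz upper envelope of `v`, the least `k`-Lipschitz majorant of `v`; it is
meaningful for `v` bounded above. -/
noncomputable def lipschitzEnvelope (v : X → ℝ) (k : ℕ) (x : X) : ℝ :=
  ⨆ y, (v y - k * dist x y)

variable {v : X → ℝ} {C : ℝ}

theorem sub_mul_dist_le_lipschitzEnvelope (hC : ∀ x, v x ≤ C) (k : ℕ) (x y : X) :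
    v y - k * dist x y ≤ lipschitzEnvelope v k x := by
  refine le_ciSup (f := fun y ↦ v y - k * dist x y) ⟨C, ?_⟩ y
  rintro _ ⟨z, rfl⟩
  exact (sub_le_self _ (by positivity)).trans (hC z)

theorem le_lipschitzEnvelope (hC : ∀ x, v x ≤ C) (k : ℕ) (x : X) :
    v x ≤ lipschitzEnvelope v k x := by
  simpa using sub_mul_dist_le_lipschitzEnvelope hC k x x

theorem lipschitzEnvelope_le (hC : ∀ x, v x ≤ C) (k : ℕ) (x : X) :
    lipschitzEnvelope v k x ≤ C :=
  have : Nonempty X := ⟨x⟩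
  ciSup_le fun y ↦ (sub_le_self _ (by positivity)).trans (hC y)

theorem lipschitzWith_lipschitzEnvelope (hC : ∀ x, v x ≤ C) (k : ℕ) :
    LipschitzWith k (lipschitzEnvelope v k) := by
  refine LipschitzWith.of_le_add_mul _ fun x x' ↦ ?_
  have : Nonempty X := ⟨x⟩
  refine ciSup_le fun y ↦ ?_
  have htri : (k : ℝ) * dist x' y ≤ k * (dist x x' + dist x y) := by
    gcongr
    exact dist_triangle_left x' y x
  have hle := sub_mul_dist_le_lipschitzEnvelope hC k x' y
  rw [NNReal.coe_natCast]
  linarith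

/-- Far from `x` the penalty `k * dist x y` beats the upper bound on `v`; near `x` upper
semicontinuity applies. -/
theorem tendsto_lipschitzEnvelope (hC : ∀ x, v x ≤ C) {x : X}
    (hv : UpperSemicontinuousAt v x) :
    Tendsto (fun k ↦ lipschitzEnvelope v k x) atTop (𝓝 (v x)) := by
  have : Nonempty X := ⟨x⟩
  refine tendsto_order.2 ⟨fun a ha ↦ .of_forall fun k ↦ ha.trans_le (le_lipschitzEnvelope hC k x),
    fun a ha ↦ ?_⟩
  obtain ⟨b, hvb, hba⟩ := exists_between ha
  obtain ⟨δ, hδ, hnear⟩ := Metric.eventually_nhds_iff.1 (hv b hvb)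
  have hlarge : ∀ᶠ k : ℕ in atTop, C - b ≤ k * δ :=
    (tendsto_natCast_atTop_atTop.atTop_mul_const hδ).eventually_ge_atTop _
  filter_upwards [hlarge] with k hk
  refine (ciSup_le fun y ↦ ?_).trans_lt hba
  rcases lt_or_ge (dist y x) δ with hy | hy
  · exact (sub_le_self _ (by positivity)).trans (hnear hy).le
  · have : (k : ℝ) * δ ≤ k * dist x y := by
      rw [dist_comm]
      gcongr
    linarith [hC y]

end LipschitzEnvelope

theorem le_integral_of_forall_continuous_le {X : Type*} [TopologicalSpace X]
    [TopologicalSpace.PseudoMetrizableSpace X] [MeasurableSpace X] [OpensMeasurableSpace X]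
    {m : Measure X} [IsFiniteMeasure m] {v : X → ℝ} {C c : ℝ} (hint : Integrable v m)
    (hC : ∀ x, v x ≤ C) (hv : UpperSemicontinuous v)
    (hc : ∀ g : C(X, ℝ), (∀ x, v x ≤ g x) → c ≤ ∫ x, g x ∂m) :
    c ≤ ∫ x, v x ∂m := by
  let _ := TopologicalSpace.pseudoMetrizableSpacePseudoMetric X
  have hcont (k : ℕ) : Continuous (lipschitzEnvelope v k) :=
    (lipschitzWith_lipschitzEnvelope hC k).continuous
  have hlim : Tendsto (fun k ↦ ∫ x, lipschitzEnvelope v k x ∂m) atTop (𝓝 (∫ x, v x ∂m)) := by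
    refine tendsto_integral_of_dominated_convergence (fun x ↦ |v x| + |C|)
      (fun k ↦ (hcont k).measurable.aestronglyMeasurable) (hint.abs.add (integrable_const _))
      (fun k ↦ .of_forall fun x ↦ ?_) (.of_forall fun x ↦ tendsto_lipschitzEnvelope hC (hv x))
    rw [Real.norm_eq_abs, abs_le]
    constructor
    · linarith [le_lipschitzEnvelope hC k x, neg_abs_le (v x), abs_nonneg C]
    · linarith [lipschitzEnvelope_le hC k x, le_abs_self C, abs_nonneg (v x)]
  exact ge_of_tendsto' hlim fun k ↦ hc ⟨_, hcont k⟩ (le_lipschitzEnvelope hC k)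

theorem upperSemicontinuous_uncurry {S Y β : Type*} [TopologicalSpace S] [DiscreteTopology S]
    [TopologicalSpace Y] [Preorder β] {w : S → Y → β} (hw : ∀ s, UpperSemicontinuous (w s)) :
    UpperSemicontinuous (Function.uncurry w) := by
  rintro ⟨s, y⟩ b hb
  rw [nhds_prod_eq, nhds_discrete, pure_prod, eventually_map]
  exact hw s y b hb

section Duality

variable {Y : Type*} [TopologicalSpace Y]

theorem exists_isProbabilityMeasure_integral_eq [CompactSpace Y] [T2Space Y] [MeasurableSpace Y]
    [BorelSpace Y] (Λ : C(Y, ℝ) →ₗ[ℝ] ℝ) (hΛ : ∀ f, 0 ≤ f → 0 ≤ Λ f) (hΛ1 : Λ 1 = 1) :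
    ∃ P : Measure Y, IsProbabilityMeasure P ∧ ∀ f : C(Y, ℝ), ∫ y, f y ∂P = Λ f := by
  let Λc : C_c(Y, ℝ) →ₗ[ℝ] ℝ :=
    { toFun f := Λ f.toContinuousMap
      map_add' f g := map_add Λ f.toContinuousMap g.toContinuousMap
      map_smul' c f := map_smul Λ c f.toContinuousMap }
  let Λp : C_c(Y, ℝ) →ₚ[ℝ] ℝ := PositiveLinearMap.mk₀ Λc fun f hf ↦ hΛ f.toContinuousMap hf
  have hint (f : C(Y, ℝ)) : ∫ y, f y ∂(RealRMK.rieszMeasure Λp) = Λ f :=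
    RealRMK.integral_rieszMeasure Λp (CompactlySupportedContinuousMap.continuousMapEquiv f)
  refine ⟨RealRMK.rieszMeasure Λp, isProbabilityMeasure_iff_real.2 ?_, hint⟩
  simpa [hΛ1] using hint 1

theorem isOpen_setOf_forall_neg [CompactSpace Y] : IsOpen {f : C(Y, ℝ) | ∀ y, f y < 0} := by
  simpa [Set.MapsTo] using
    ContinuousMap.isOpen_setOfPred_mapsTo (isCompact_univ (X := Y)) (isOpen_Iio (a := (0 : ℝ)))

theorem convex_setOf_forall_neg : Convex ℝ {f : C(Y, ℝ) | ∀ y, f y < 0} :=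
  fun _ hf _ hg _ _ ha hb hab y ↦ convex_Iio (0 : ℝ) (hf y) (hg y) ha hb hab

theorem nonpos_of_forall_pos_mul_lt {a u : ℝ} (h : ∀ t > 0, t * a < u) : a ≤ 0 := by
  by_contra! ha
  have := h ((|u| + 1) / a) (by positivity)
  rw [div_mul_cancel₀ _ ha.ne'] at this
  linarith [le_abs_self u]

theorem nonneg_of_forall_pos_mul_lt {a u : ℝ} (h : ∀ t > 0, t * a < u) : 0 ≤ u := by
  by_contra! hu
  have ha : a < 0 := by linarith [h 1 one_pos]
  have := h (u / a) (div_pos_of_neg_of_neg hu ha)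
  rw [div_mul_cancel₀ _ ha.ne] at this
  exact this.false

/-- A hyperplane separating `K` from the open cone of negative functions is the kernel of a
positive functional. -/
theorem exists_positive_functional_nonneg_on [CompactSpace Y] {K : Set C(Y, ℝ)}
    (hK : Convex ℝ K) (hne : K.Nonempty) (hKpos : ∀ f ∈ K, ∃ y, 0 ≤ f y) :
    ∃ Λ : C(Y, ℝ) →ₗ[ℝ] ℝ, (∀ f, 0 ≤ f → 0 ≤ Λ f) ∧ Λ 1 = 1 ∧ ∀ f ∈ K, 0 ≤ Λ f := by
  obtain ⟨L, u, hneg, hKu⟩ := geometric_hahn_banach_open convex_setOf_forall_neg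
    isOpen_setOf_forall_neg hK
    (Set.disjoint_left.2 fun f hf hfK ↦ (hKpos f hfK).elim fun y hy ↦ (hf y).not_ge hy)
  have hscale (f : C(Y, ℝ)) (hf : ∀ y, f y < 0) (t : ℝ) (ht : t > 0) : t * L f < u := by
    simpa using hneg (t • f) fun y ↦ by simpa using mul_neg_of_pos_of_neg ht (hf y)
  have hone : ∀ y : Y, (-1 : C(Y, ℝ)) y < 0 := by simp
  have hu : 0 ≤ u := nonneg_of_forall_pos_mul_lt (hscale (-1) hone)
  have hLle (f : C(Y, ℝ)) (c : ℝ) (hf : ∀ y, f y < c) : L f ≤ c * L 1 := by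
    simpa using nonpos_of_forall_pos_mul_lt (hscale (f - c • 1) fun y ↦ by simpa using hf y)
  have hL1 : 0 < L 1 := by
    obtain ⟨k, hk⟩ := hne
    have hlt : -L 1 < u := by simpa using hneg (-1) hone
    have hle := hLle k (‖k‖ + 1) fun y ↦ (k.apply_le_norm y).trans_lt (lt_add_one _)
    by_contra! hL1
    nlinarith [hKu k hk, norm_nonneg k]
  have hLnonneg (f : C(Y, ℝ)) (hf : 0 ≤ f) : 0 ≤ L f := by
    refine le_of_forall_pos_le_add fun ε hε ↦ ?_
    have := hLle (-f) (ε / L 1) fun y ↦ (neg_nonpos.2 (hf y)).trans_lt (div_pos hε hL1)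
    rw [div_mul_cancel₀ _ hL1.ne', map_neg] at this
    linarith
  refine ⟨(L 1)⁻¹ • (L : C(Y, ℝ) →ₗ[ℝ] ℝ), fun f hf ↦ ?_, inv_mul_cancel₀ hL1.ne', fun f hf ↦ ?_⟩
  · exact mul_nonneg (inv_nonneg.2 hL1.le) (hLnonneg f hf)
  · exact mul_nonneg (inv_nonneg.2 hL1.le) (hu.trans (hKu f hf))

theorem exists_isProbabilityMeasure_forall_integral_nonneg [CompactSpace Y] [T2Space Y]
    [MeasurableSpace Y] [BorelSpace Y] {K : Set C(Y, ℝ)} (hK : Convex ℝ K) (hne : K.Nonempty)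
    (hKpos : ∀ f ∈ K, ∃ y, 0 ≤ f y) :
    ∃ P : Measure Y, IsProbabilityMeasure P ∧ ∀ f ∈ K, 0 ≤ ∫ y, f y ∂P := by
  obtain ⟨Λ, hΛ, hΛ1, hΛK⟩ := exists_positive_functional_nonneg_on hK hne hKpos
  obtain ⟨P, hP, hPΛ⟩ := exists_isProbabilityMeasure_integral_eq Λ hΛ hΛ1
  exact ⟨P, hP, fun f hf ↦ (hPΛ f).symm ▸ hΛK f hf⟩

/-- The values of the linear program dual to maximizing `∫ y, v y ∂P` over the probability
measures `P` that annihilate `G`. -/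
def dualValues (G : Submodule ℝ C(Y, ℝ)) (v : Y → ℝ) : Set ℝ :=
  {c | ∃ g ∈ G, ∀ y, v y ≤ c + g y}

/-- The continuous functions that, up to an element of `G`, majorize `v - d`. -/
def majorantsMod (G : Submodule ℝ C(Y, ℝ)) (v : Y → ℝ) (d : ℝ) : Set C(Y, ℝ) :=
  {f | ∃ g ∈ G, ∀ y, v y ≤ d + g y + f y}

variable {G : Submodule ℝ C(Y, ℝ)} {v : Y → ℝ} {d : ℝ}

theorem convex_majorantsMod : Convex ℝ (majorantsMod G v d) := by
  rintro f ⟨g, hg, hf⟩ f' ⟨g', hg', hf'⟩ a b ha hb hab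
  refine ⟨a • g + b • g', G.add_mem (G.smul_mem a hg) (G.smul_mem b hg'), fun y ↦ ?_⟩
  simp only [ContinuousMap.add_apply, ContinuousMap.smul_apply, smul_eq_mul]
  calc v y = a * v y + b * v y := by rw [← add_mul, hab, one_mul]
    _ ≤ a * (d + g y + f y) + b * (d + g' y + f' y) := by
      gcongr
      exacts [hf y, hf' y]
    _ = (a + b) * d + (a * g y + b * g' y) + (a * f y + b * f' y) := by ring
    _ = d + (a * g y + b * g' y) + (a * f y + b * f' y) := by rw [hab, one_mul]

theorem add_mem_majorantsMod {f g : C(Y, ℝ)} (hf : f ∈ majorantsMod G v d) (hg : g ∈ G) :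
    f + g ∈ majorantsMod G v d := by
  obtain ⟨g', hg', hfg⟩ := hf
  refine ⟨g' - g, G.sub_mem hg' hg, fun y ↦ (hfg y).trans_eq ?_⟩
  simp only [ContinuousMap.sub_apply, ContinuousMap.add_apply]
  ring

theorem sub_const_mem_majorantsMod {f : C(Y, ℝ)} (hf : ∀ y, v y ≤ f y) :
    f - ContinuousMap.const Y d ∈ majorantsMod G v d :=
  ⟨0, G.zero_mem, fun y ↦ by simpa using hf y⟩

theorem exists_nonneg_of_mem_majorantsMod [CompactSpace Y] [Nonempty Y]
    (hd : d ∈ lowerBounds (dualValues G v)) {f : C(Y, ℝ)} (hf : f ∈ majorantsMod G v d) :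
    ∃ y, 0 ≤ f y := by
  obtain ⟨g, hg, hvg⟩ := hf
  obtain ⟨y₀, -, hmax⟩ := isCompact_univ.exists_isMaxOn Set.univ_nonempty f.continuous.continuousOn
  have hmem : d + f y₀ ∈ dualValues G v :=
    ⟨g, hg, fun y ↦ by linarith [hvg y, isMaxOn_iff.1 hmax y (Set.mem_univ y)]⟩
  exact ⟨y₀, by linarith [hd hmem]⟩

variable [MeasurableSpace Y] [BorelSpace Y] {C : ℝ}

theorem integrable_of_upperSemicontinuous {P : Measure Y} [IsFiniteMeasure P]
    (hC : ∀ y, |v y| ≤ C) (hv : UpperSemicontinuous v) : Integrable v P :=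
  .of_bound hv.measurable.aestronglyMeasurable C (.of_forall hC)

theorem integrable_continuousMap [CompactSpace Y] (P : Measure Y) [IsFiniteMeasure P]
    (f : C(Y, ℝ)) : Integrable f P :=
  f.continuous.integrable_of_hasCompactSupport (.of_compactSpace f)

theorem integral_le_of_mem_dualValues [CompactSpace Y] {P : Measure Y} [IsProbabilityMeasure P]
    (hG : ∀ g ∈ G, ∫ y, g y ∂P = 0) (hC : ∀ y, |v y| ≤ C) (hv : UpperSemicontinuous v)
    {c : ℝ} (hc : c ∈ dualValues G v) : ∫ y, v y ∂P ≤ c := by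
  obtain ⟨g, hg, hvg⟩ := hc
  calc ∫ y, v y ∂P ≤ ∫ y, (c + g y) ∂P :=
        integral_mono (integrable_of_upperSemicontinuous hC hv)
          ((integrable_const c).add (integrable_continuousMap P g)) hvg
    _ = c := by
      rw [integral_add (integrable_const c) (integrable_continuousMap P g), hG g hg]
      simp

theorem exists_isProbabilityMeasure_le_integral [CompactSpace Y] [Nonempty Y]
    [TopologicalSpace.MetrizableSpace Y] (hC : ∀ y, |v y| ≤ C) (hv : UpperSemicontinuous v)
    (hd : d ∈ lowerBounds (dualValues G v)) :
    ∃ P : Measure Y, IsProbabilityMeasure P ∧ (∀ g ∈ G, ∫ y, g y ∂P = 0) ∧ d ≤ ∫ y, v y ∂P := by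
  have hvC (y : Y) : v y ≤ C := (le_abs_self _).trans (hC y)
  have hK : ContinuousMap.const Y C - ContinuousMap.const Y d ∈ majorantsMod G v d :=
    sub_const_mem_majorantsMod hvC
  obtain ⟨P, hP, hPK⟩ := exists_isProbabilityMeasure_forall_integral_nonneg convex_majorantsMod
    ⟨_, hK⟩ fun f hf ↦ exists_nonneg_of_mem_majorantsMod hd hf
  refine ⟨P, hP, fun g hg ↦ ?_, ?_⟩
  · have hbound (t : ℝ) : 0 ≤ C - d + t * ∫ y, g y ∂P := by
      have := hPK _ (add_mem_majorantsMod hK (G.smul_mem t hg))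
      simpa [integral_add, integral_const_mul, (integrable_continuousMap P g).const_mul t]
        using this
    by_contra hne
    have := hbound (-(C - d + 1) / ∫ y, g y ∂P)
    rw [div_mul_cancel₀ _ hne] at this
    linarith
  · refine le_integral_of_forall_continuous_le (integrable_of_upperSemicontinuous hC hv) hvC hv
      fun g hg ↦ ?_
    have := hPK _ (sub_const_mem_majorantsMod hg)
    simpa [integral_sub, integrable_continuousMap P g] using this

theorem isGreatest_sInf_dualValues [CompactSpace Y] [Nonempty Y]
    [TopologicalSpace.MetrizableSpace Y] (hC : ∀ y, |v y| ≤ C) (hv : UpperSemicontinuous v)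
    (hbdd : BddBelow (dualValues G v)) :
    IsGreatest {r | ∃ P : Measure Y, (IsProbabilityMeasure P ∧ ∀ g ∈ G, ∫ y, g y ∂P = 0) ∧
      r = ∫ y, v y ∂P} (sInf (dualValues G v)) := by
  have hweak (Q : Measure Y) (hQ : IsProbabilityMeasure Q) (hQG : ∀ g ∈ G, ∫ y, g y ∂Q = 0) :
      ∫ y, v y ∂Q ≤ sInf (dualValues G v) := by
    refine le_csInf ⟨C, 0, G.zero_mem, fun y ↦ ?_⟩ fun c hc ↦
      integral_le_of_mem_dualValues hQG hC hv hc
    simpa using (le_abs_self _).trans (hC y)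
  obtain ⟨P, hP, hPG, hle⟩ :=
    exists_isProbabilityMeasure_le_integral hC hv fun c hc ↦ csInf_le hbdd hc
  refine ⟨⟨P, ⟨hP, hPG⟩, hle.antisymm (hweak P hP hPG)⟩, ?_⟩
  rintro _ ⟨Q, ⟨hQ, hQG⟩, rfl⟩
  exact hweak Q hQ hQG

end Duality

section CondExp

variable {Y Z : Type*} [MeasurableSpace Y] {P : Measure Y} {ξ : Y → Z} [TopologicalSpace Z]
  [MeasurableSpace Z] {d f : Y → ℝ} {w : Z → ℝ}

theorem integral_map_withDensity_ofReal [OpensMeasurableSpace Z] (hξ : Measurable ξ)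
    (hd : AEMeasurable d P) (φ : Z →ᵇ ℝ) :
    ∫ z, φ z ∂((P.withDensity fun y ↦ ENNReal.ofReal (d y)).map ξ) =
      ∫ y, φ (ξ y) * max (d y) 0 ∂P := by
  rw [integral_map hξ.aemeasurable φ.continuous.measurable.aestronglyMeasurable,
    integral_withDensity_eq_integral_toReal_smul₀ hd.ennreal_ofReal
      (.of_forall fun _ ↦ ENNReal.ofReal_lt_top)]
  simp only [ENNReal.toReal_ofReal', smul_eq_mul, mul_comm]

theorem integrable_comp_mul [OpensMeasurableSpace Z] (hξ : Measurable ξ) (hd : Integrable d P)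
    (φ : Z →ᵇ ℝ) : Integrable (fun y ↦ φ (ξ y) * d y) P :=
  hd.bdd_mul (φ.continuous.measurable.comp hξ).aestronglyMeasurable
    (.of_forall fun y ↦ φ.norm_coe_le_norm (ξ y))

/-- The positive and negative parts of `d`, pushed forward along `ξ`, are finite measures that
integrate every bounded continuous function equally. -/
theorem setIntegral_preimage_eq_zero_of_forall_integral_mul_eq_zero_s15 [BorelSpace Z]
    [HasOuterApproxClosed Z] (hξ : Measurable ξ) (hd : Integrable d P)
    (h : ∀ φ : Z →ᵇ ℝ, ∫ y, φ (ξ y) * d y ∂P = 0) {B : Set Z} (hB : MeasurableSet B) :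
    ∫ y in ξ ⁻¹' B, d y ∂P = 0 := by
  have := isFiniteMeasure_withDensity_ofReal hd.2
  have := isFiniteMeasure_withDensity_ofReal hd.neg.2
  have hparts : (P.withDensity fun y ↦ ENNReal.ofReal (d y)).map ξ =
      (P.withDensity fun y ↦ ENNReal.ofReal ((-d) y)).map ξ := by
    refine ext_of_forall_integral_eq_of_IsFiniteMeasure fun φ ↦ sub_eq_zero.1 ?_
    rw [integral_map_withDensity_ofReal hξ hd.aemeasurable,
      integral_map_withDensity_ofReal hξ hd.neg.aemeasurable,
      ← integral_sub (integrable_comp_mul hξ hd.pos_part φ)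
        (integrable_comp_mul hξ hd.neg.pos_part φ)]
    simpa only [← mul_sub, Pi.neg_apply, max_zero_sub_max_neg_zero_eq_self] using h φ
  have hmass := congrArg (fun ν ↦ ν B) hparts
  rw [Measure.map_apply hξ hB, Measure.map_apply hξ hB, withDensity_apply _ (hξ hB),
    withDensity_apply _ (hξ hB)] at hmass
  rw [integral_eq_lintegral_pos_part_sub_lintegral_neg_part hd.integrableOn, sub_eq_zero]
  exact congrArg ENNReal.toReal hmass

theorem integral_mul_sub_eq_zero_of_ae_eq_condExp [OpensMeasurableSpace Z] [IsFiniteMeasure P]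
    (hξ : Measurable ξ) (hf : Integrable f P) (hw : Integrable (fun y ↦ w (ξ y)) P)
    (h : (fun y ↦ w (ξ y)) =ᵐ[P] P[f | MeasurableSpace.comap ξ inferInstance]) (φ : Z →ᵇ ℝ) :
    ∫ y, φ (ξ y) * (f y - w (ξ y)) ∂P = 0 := by
  have hpull : P[(fun y ↦ φ (ξ y)) * f | MeasurableSpace.comap ξ inferInstance] =ᵐ[P]
      (fun y ↦ φ (ξ y)) * P[f | MeasurableSpace.comap ξ inferInstance] :=
    condExp_stronglyMeasurable_mul_of_bound hξ.comap_le
      (φ.continuous.measurable.comp (comap_measurable ξ)).stronglyMeasurable hf ‖φ‖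
      (.of_forall fun y ↦ φ.norm_coe_le_norm (ξ y))
  have hint : ∫ y, φ (ξ y) * f y ∂P = ∫ y, φ (ξ y) * w (ξ y) ∂P := by
    calc ∫ y, φ (ξ y) * f y ∂P
        = ∫ y, P[(fun y ↦ φ (ξ y)) * f | MeasurableSpace.comap ξ inferInstance] y ∂P :=
          (integral_condExp hξ.comap_le).symm
      _ = ∫ y, φ (ξ y) * w (ξ y) ∂P := by
          refine integral_congr_ae ?_
          filter_upwards [hpull, h] with y hy hwy
          rw [hy, Pi.mul_apply, hwy]
  simp only [mul_sub]
  rw [integral_sub (integrable_comp_mul hξ hf φ) (integrable_comp_mul hξ hw φ), hint, sub_self]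

theorem ae_eq_condExp_of_forall_integral_mul_sub_eq_zero [BorelSpace Z]
    [HasOuterApproxClosed Z] [IsFiniteMeasure P] (hξ : Measurable ξ) (hf : Integrable f P)
    (hwm : Measurable w) (hw : Integrable (fun y ↦ w (ξ y)) P)
    (h : ∀ φ : Z →ᵇ ℝ, ∫ y, φ (ξ y) * (f y - w (ξ y)) ∂P = 0) :
    (fun y ↦ w (ξ y)) =ᵐ[P] P[f | MeasurableSpace.comap ξ inferInstance] := by
  refine ae_eq_condExp_of_forall_setIntegral_eq hξ.comap_le hf (fun _ _ _ ↦ hw.integrableOn) ?_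
    (hwm.comp (comap_measurable ξ)).aestronglyMeasurable
  rintro _ ⟨B, hB, rfl⟩ -
  have := setIntegral_preimage_eq_zero_of_forall_integral_mul_eq_zero_s15 hξ (hf.sub hw) h hB
  rw [integral_sub' hf.integrableOn hw.integrableOn, sub_eq_zero] at this
  exact this.symm

end CondExp

section BeliefLaw

variable {ι : Type*} {p : ℝ} {P : Measure (Bool × (ι → BeliefI))}

/-- The indicator `1_ℓ` of the state `ℓ`, on pairs of a state and a profile of beliefs. -/
noncomputable abbrev indStateL : Bool × (ι → BeliefI) → ℝ :=
  Set.indicator {z | z.1 = StateL} fun _ ↦ 1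

theorem measurableSet_stateL : MeasurableSet {z : Bool × (ι → BeliefI) | z.1 = StateL} :=
  measurable_fst (measurableSet_singleton StateL)

theorem continuous_indStateL : Continuous (indStateL (ι := ι)) :=
  ((isClopen_discrete {StateL}).preimage continuous_fst).continuous_indicator continuous_const

theorem integrable_indStateL [IsFiniteMeasure P] : Integrable indStateL P :=
  (integrable_const 1).indicator measurableSet_stateL

theorem integrable_belief [IsFiniteMeasure P] (i : ι) : Integrable (fun z ↦ (z.2 i).1) P := by
  refine .of_bound (Measurable.aestronglyMeasurable (by fun_prop)) 1 (.of_forall fun z ↦ ?_)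
  exact abs_le.2 ⟨by linarith [(z.2 i).2.1], (z.2 i).2.2⟩

/-- The feasible joint laws of the state and the receivers' beliefs, for prior `p = p(ℓ)`. The
calibration of the beliefs in state `ℓ` implies the one in state `h`. -/
structure IsBeliefLaw (p : ℝ) (P : Measure (Bool × (ι → BeliefI))) : Prop where
  isProbabilityMeasure : IsProbabilityMeasure P
  real_stateL : P.real {z | z.1 = StateL} = p
  belief_ae_eq_condExp (i : ι) : (fun z ↦ (z.2 i).1) =ᵐ[P]
    P[indStateL | MeasurableSpace.comap (fun z ↦ z.2 i) inferInstance]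

theorem belief_ae_eq_condExp_iff [IsFiniteMeasure P] (i : ι) :
    (fun z ↦ (z.2 i).1) =ᵐ[P]
        P[indStateL | MeasurableSpace.comap (fun z ↦ z.2 i) inferInstance] ↔
      ∀ φ : BeliefI →ᵇ ℝ, ∫ z, φ (z.2 i) * (indStateL z - (z.2 i).1) ∂P = 0 :=
  have hξ : Measurable fun z : Bool × (ι → BeliefI) ↦ z.2 i := by fun_prop
  ⟨integral_mul_sub_eq_zero_of_ae_eq_condExp hξ integrable_indStateL (integrable_belief i),
    ae_eq_condExp_of_forall_integral_mul_sub_eq_zero hξ integrable_indStateL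
      measurable_subtype_coe (integrable_belief i)⟩

variable [Fintype ι]

/-- The test function `t (1_ℓ - p) + ∑ i, α i (x i) (1_ℓ - x i)` attached to `a = (t, α)`. A
probability measure is a feasible law exactly when it annihilates all of these. -/
noncomputable def beliefTest (p : ℝ) :
    (ℝ × (ι → C(BeliefI, ℝ))) →ₗ[ℝ] C(Bool × (ι → BeliefI), ℝ) where
  toFun a :=
    { toFun z := a.1 * (indStateL z - p) + ∑ i, a.2 i (z.2 i) * (indStateL z - (z.2 i).1)
      continuous_toFun := by
        have := continuous_indStateL (ι := ι)
        fun_prop }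
  map_add' a b := by
    ext z
    simp only [Prod.fst_add, Prod.snd_add, Pi.add_apply, ContinuousMap.add_apply,
      ContinuousMap.coe_mk, add_mul, Finset.sum_add_distrib]
    ring
  map_smul' c a := by
    ext z
    simp only [Prod.smul_fst, Prod.smul_snd, Pi.smul_apply, ContinuousMap.smul_apply,
      ContinuousMap.coe_mk, smul_eq_mul, mul_assoc, mul_add, Finset.mul_sum, RingHom.id_apply]

theorem beliefTest_apply (t : ℝ) (α : ι → C(BeliefI, ℝ)) (z : Bool × (ι → BeliefI)) :
    beliefTest p (t, α) z =
      t * (indStateL z - p) + ∑ i, α i (z.2 i) * (indStateL z - (z.2 i).1) :=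
  rfl

theorem beliefTest_stateL (t : ℝ) (α : ι → C(BeliefI, ℝ)) (x : ι → BeliefI) :
    beliefTest p (t, α) (StateL, x) = t * (1 - p) + ∑ i, (1 - (x i).1) * α i (x i) := by
  simp [beliefTest_apply, mul_comm]

theorem beliefTest_stateH (t : ℝ) (α : ι → C(BeliefI, ℝ)) (x : ι → BeliefI) :
    beliefTest p (t, α) (StateH, x) = -(t * p) - ∑ i, (x i).1 * α i (x i) := by
  simp [beliefTest_apply, mul_comm, sub_eq_add_neg]

theorem integral_beliefTest [IsProbabilityMeasure P] (t : ℝ) (α : ι → C(BeliefI, ℝ)) :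
    ∫ z, beliefTest p (t, α) z ∂P = t * (P.real {z | z.1 = StateL} - p) +
      ∑ i, ∫ z, α i (z.2 i) * (indStateL z - (z.2 i).1) ∂P := by
  have hcal (i : ι) : Integrable (fun z ↦ α i (z.2 i) * (indStateL z - (z.2 i).1)) P :=
    integrable_comp_mul (ξ := fun z : Bool × (ι → BeliefI) ↦ z.2 i) (by fun_prop)
      (integrable_indStateL.sub (integrable_belief i))
      (BoundedContinuousFunction.mkOfCompact (α i))
  have hprior : Integrable (fun z ↦ t * (indStateL z - p)) P :=
    (integrable_indStateL.sub (integrable_const p)).const_mul t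
  simp only [beliefTest_apply]
  rw [integral_add hprior (integrable_finsetSum _ fun i _ ↦ hcal i), integral_const_mul,
    integral_sub integrable_indStateL (integrable_const p),
    integral_indicator_const _ measurableSet_stateL, integral_finsetSum _ fun i _ ↦ hcal i]
  simp

theorem isBeliefLaw_iff_forall_integral_eq_zero :
    IsBeliefLaw p P ↔ IsProbabilityMeasure P ∧
      ∀ g ∈ LinearMap.range (beliefTest p), ∫ z, g z ∂P = 0 := by
  constructor
  · rintro ⟨hP, hp, hcal⟩
    refine ⟨hP, ?_⟩
    rintro _ ⟨⟨t, α⟩, rfl⟩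
    rw [integral_beliefTest, hp, sub_self, mul_zero, zero_add]
    exact Finset.sum_eq_zero fun i _ ↦
      (belief_ae_eq_condExp_iff i).1 (hcal i) (BoundedContinuousFunction.mkOfCompact (α i))
  · rintro ⟨hP, htest⟩
    have hzero (t : ℝ) (α : ι → C(BeliefI, ℝ)) := integral_beliefTest (p := p) (P := P) t α ▸
      htest (beliefTest p (t, α)) ⟨_, rfl⟩
    refine ⟨hP, ?_, fun i ↦ (belief_ae_eq_condExp_iff i).2 fun φ ↦ ?_⟩
    · simpa [sub_eq_zero] using hzero 1 0
    · classical
      have := hzero 0 (Pi.single i φ.toContinuousMap)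
      rwa [zero_mul, zero_add, Finset.sum_eq_single i (fun j _ hj ↦ by simp [hj]) (by simp),
        Pi.single_eq_same] at this

theorem dualValues_range_beliefTest (v : Bool → (ι → BeliefI) → ℝ) :
    dualValues (LinearMap.range (beliefTest p)) (Function.uncurry v) =
      {r | ∃ (Vl Vh : ℝ) (α : ι → BeliefI → ℝ), (∀ i, Continuous (α i)) ∧
        (∀ x, v StateL x ≤ Vl + ∑ i, (1 - (x i).1) * α i (x i)) ∧
        (∀ x, v StateH x ≤ Vh - ∑ i, (x i).1 * α i (x i)) ∧
        r = p * Vl + (1 - p) * Vh} := by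
  ext c
  constructor
  · rintro ⟨_, ⟨⟨t, α⟩, rfl⟩, hv⟩
    refine ⟨c + t * (1 - p), c - t * p, fun i ↦ α i, fun i ↦ (α i).continuous, fun x ↦ ?_,
      fun x ↦ ?_, by ring⟩
    · have := hv (StateL, x)
      rw [beliefTest_stateL, ← add_assoc] at this
      exact this
    · have := hv (StateH, x)
      rw [beliefTest_stateH, ← add_sub_assoc, ← sub_eq_add_neg] at this
      exact this
  · rintro ⟨Vl, Vh, α, hα, hl, hh, rfl⟩
    refine ⟨_, ⟨(Vl - Vh, fun i ↦ ⟨α i, hα i⟩), rfl⟩, ?_⟩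
    rintro ⟨_ | _, x⟩
    · rw [beliefTest_stateH]
      exact (hh x).trans_eq (by simp only [ContinuousMap.coe_mk]; ring)
    · rw [beliefTest_stateL]
      exact (hl x).trans_eq (by simp only [ContinuousMap.coe_mk]; ring)

/-- Averaging the two constraints at the uninformative profile `x i = p` cancels the `α i`. -/
theorem le_of_mem_dualValues_beliefTest (hp0 : 0 ≤ p) (hp1 : p ≤ 1) {C c : ℝ}
    {v : Bool × (ι → BeliefI) → ℝ} (hC : ∀ z, C ≤ v z)
    (hc : c ∈ dualValues (LinearMap.range (beliefTest p)) v) : C ≤ c := by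
  obtain ⟨_, ⟨⟨t, α⟩, rfl⟩, hv⟩ := hc
  let x : ι → BeliefI := fun _ ↦ ⟨p, hp0, hp1⟩
  have hl := (hC _).trans (hv (StateL, x))
  have hh := (hC _).trans (hv (StateH, x))
  simp only [beliefTest_stateL, x, ← Finset.mul_sum] at hl
  simp only [beliefTest_stateH, x, ← Finset.mul_sum] at hh
  calc C = p * C + (1 - p) * C := by ring
    _ ≤ p * (c + (t * (1 - p) + (1 - p) * ∑ i, α i (x i))) +
        (1 - p) * (c + (-(t * p) - p * ∑ i, α i (x i))) :=
      add_le_add (mul_le_mul_of_nonneg_left hl hp0)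
        (mul_le_mul_of_nonneg_left hh (sub_nonneg.2 hp1))
    _ = c := by ring

theorem binary_dual_value_general (hp0 : 0 ≤ p) (hp1 : p ≤ 1)
    (v : Bool → (ι → BeliefI) → ℝ) (hvb : ∃ C : ℝ, ∀ s x, |v s x| ≤ C)
    (hvusc : ∀ s, UpperSemicontinuous (v s)) :
    sSup {r | ∃ P : Measure (Bool × (ι → BeliefI)), IsBeliefLaw p P ∧ r = ∫ z, v z.1 z.2 ∂P} =
      sInf {r | ∃ (Vl Vh : ℝ) (α : ι → BeliefI → ℝ), (∀ i, Continuous (α i)) ∧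
        (∀ x, v StateL x ≤ Vl + ∑ i, (1 - (x i).1) * α i (x i)) ∧
        (∀ x, v StateH x ≤ Vh - ∑ i, (x i).1 * α i (x i)) ∧
        r = p * Vl + (1 - p) * Vh} := by
  obtain ⟨C, hC⟩ := hvb
  have hbdd : BddBelow (dualValues (LinearMap.range (beliefTest p)) (Function.uncurry v)) :=
    ⟨-C, fun _ ↦ le_of_mem_dualValues_beliefTest hp0 hp1 fun z ↦ (abs_le.1 (hC z.1 z.2)).1⟩
  simp only [isBeliefLaw_iff_forall_integral_eq_zero]
  rw [← dualValues_range_beliefTest]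
  exact (isGreatest_sInf_dualValues (fun (s, x) ↦ hC s x) (upperSemicontinuous_uncurry hvusc)
    hbdd).csSup_eq

end BeliefLaw

section TwoReceivers

variable {p : ℝ}

theorem integral_jointPBin (hp0 : 0 ≤ p) (hp1 : p ≤ 1) {μl μh : Measure (Fin 2 → BeliefI)}
    [IsFiniteMeasure μl] [IsFiniteMeasure μh] {f : Bool × (Fin 2 → BeliefI) → ℝ} {C : ℝ}
    (hf : Measurable f) (hC : ∀ z, |f z| ≤ C) :
    ∫ z, f z ∂(jointPBin p μl μh) =
      p * ∫ x, f (StateL, x) ∂μl + (1 - p) * ∫ x, f (StateH, x) ∂μh := by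
  have hint (s : Bool) (μ : Measure (Fin 2 → BeliefI)) [IsFiniteMeasure μ] (r : ℝ) :
      Integrable f (ENNReal.ofReal r • (Measure.dirac s).prod μ) :=
    (Integrable.of_bound hf.aestronglyMeasurable C (.of_forall hC)).smul_measure
      ENNReal.ofReal_ne_top
  have hprod (s : Bool) (μ : Measure (Fin 2 → BeliefI)) [IsFiniteMeasure μ] :
      ∫ z, f z ∂((Measure.dirac s).prod μ) = ∫ x, f (s, x) ∂μ := by
    rw [Measure.dirac_prod, integral_map (by fun_prop) hf.aestronglyMeasurable]
  rw [jointPBin, integral_add_measure (hint _ _ _) (hint _ _ _), integral_smul_measure,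
    integral_smul_measure, hprod, hprod, ENNReal.toReal_ofReal hp0,
    ENNReal.toReal_ofReal (sub_nonneg.2 hp1), smul_eq_mul, smul_eq_mul]

theorem isProbabilityMeasure_jointPBin (hp0 : 0 ≤ p) (hp1 : p ≤ 1)
    (μl μh : Measure (Fin 2 → BeliefI)) [IsProbabilityMeasure μl] [IsProbabilityMeasure μh] :
    IsProbabilityMeasure (jointPBin p μl μh) := by
  constructor
  simp [jointPBin, ← ENNReal.ofReal_add hp0 (sub_nonneg.2 hp1)]

theorem real_jointPBin_stateL (hp0 : 0 ≤ p) (μl μh : Measure (Fin 2 → BeliefI))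
    [IsProbabilityMeasure μl] [IsProbabilityMeasure μh] :
    (jointPBin p μl μh).real {z | z.1 = StateL} = p := by
  have : {z : Bool × (Fin 2 → BeliefI) | z.1 = StateL} = {StateL} ×ˢ Set.univ := by
    ext
    simp
  simp [this, jointPBin, measureReal_def, hp0]

theorem one_sub_belief_ae_eq_condExp {ι : Type*} {P : Measure (Bool × (ι → BeliefI))}
    [IsFiniteMeasure P] {i : ι} (h : (fun z ↦ (z.2 i).1) =ᵐ[P]
      P[indStateL | MeasurableSpace.comap (fun z ↦ z.2 i) inferInstance]) :
    (fun z ↦ 1 - (z.2 i).1) =ᵐ[P] P[Set.indicator {z | z.1 = StateH} fun _ ↦ (1 : ℝ) |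
      MeasurableSpace.comap (fun z ↦ z.2 i) inferInstance] := by
  have hξ : Measurable fun z : Bool × (ι → BeliefI) ↦ z.2 i := by fun_prop
  have hcompl : Set.indicator {z : Bool × (ι → BeliefI) | z.1 = StateH} (fun _ ↦ (1 : ℝ)) =
      (fun _ ↦ 1) - indStateL := by
    ext ⟨_ | _, x⟩ <;> simp [Set.indicator]
  rw [hcompl]
  filter_upwards [h, condExp_sub (integrable_const (1 : ℝ)) integrable_indStateL
    (MeasurableSpace.comap (fun z : Bool × (ι → BeliefI) ↦ z.2 i) inferInstance)] with z hz hsub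
  rw [hsub, condExp_const hξ.comap_le, Pi.sub_apply, ← hz]

theorem feasibleBin_iff_isBeliefLaw (hp0 : 0 ≤ p) (hp1 : p ≤ 1)
    {μl μh : Measure (Fin 2 → BeliefI)} [IsProbabilityMeasure μl] [IsProbabilityMeasure μh] :
    FeasibleBin p μl μh ↔ IsBeliefLaw p (jointPBin p μl μh) := by
  have hP := isProbabilityMeasure_jointPBin hp0 hp1 μl μh
  exact ⟨fun h ↦ ⟨hP, real_jointPBin_stateL hp0 μl μh, fun i ↦ (h.2.2 i).1⟩,
    fun h ↦ ⟨‹_›, ‹_›, fun i ↦ ⟨h.belief_ae_eq_condExp i,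
      one_sub_belief_ae_eq_condExp (h.belief_ae_eq_condExp i)⟩⟩⟩

theorem exists_eq_jointPBin {P : Measure (Bool × (Fin 2 → BeliefI))} [IsProbabilityMeasure P]
    (hp : P.real {z | z.1 = StateL} = p) :
    ∃ μl μh : Measure (Fin 2 → BeliefI),
      IsProbabilityMeasure μl ∧ IsProbabilityMeasure μh ∧ P = jointPBin p μl μh := by
  have hl : P.fst {StateL} = ENNReal.ofReal p := by
    rw [Measure.fst_apply (measurableSet_singleton _), ← hp, ofReal_measureReal]
    rfl
  have hh : P.fst {StateH} = ENNReal.ofReal (1 - p) := by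
    have hcompl : ({StateH} : Set Bool) = {StateL}ᶜ := by ext (_ | _) <;> simp
    rw [hcompl, prob_compl_eq_one_sub (measurableSet_singleton _), hl,
      ENNReal.ofReal_sub _ (hp ▸ measureReal_nonneg), ENNReal.ofReal_one]
  refine ⟨P.condKernel StateL, P.condKernel StateH, inferInstance, inferInstance, ?_⟩
  ext S hS
  conv_lhs => rw [← P.disintegrate P.condKernel]
  rw [Measure.compProd_apply hS, lintegral_fintype, Fintype.sum_bool, hl, hh]
  simp only [jointPBin, Measure.add_apply, Measure.smul_apply, Measure.dirac_prod, smul_eq_mul,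
    Measure.map_apply measurable_prodMk_left hS, mul_comm]

theorem valBin_eq_sSup_isBeliefLaw (hp0 : 0 ≤ p) (hp1 : p ≤ 1) {v : Bool → (Fin 2 → BeliefI) → ℝ}
    {C : ℝ} (hC : ∀ s x, |v s x| ≤ C) (hv : ∀ s, Measurable (v s)) :
    ValBin p (v StateL) (v StateH) =
      sSup {r | ∃ P : Measure (Bool × (Fin 2 → BeliefI)), IsBeliefLaw p P ∧
        r = ∫ z, v z.1 z.2 ∂P} := by
  have hint (μl μh : Measure (Fin 2 → BeliefI)) [IsProbabilityMeasure μl]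
      [IsProbabilityMeasure μh] : ∫ z, v z.1 z.2 ∂(jointPBin p μl μh) =
        p * ∫ x, v StateL x ∂μl + (1 - p) * ∫ x, v StateH x ∂μh :=
    integral_jointPBin hp0 hp1 (measurable_from_prod_countable_right hv) fun z ↦ hC z.1 z.2
  unfold ValBin
  congr 1 with r
  constructor
  · rintro ⟨μl, μh, hfeas, rfl⟩
    have := hfeas.1
    have := hfeas.2.1
    exact ⟨_, (feasibleBin_iff_isBeliefLaw hp0 hp1).1 hfeas, (hint μl μh).symm⟩
  · rintro ⟨P, hP, rfl⟩
    have := hP.isProbabilityMeasure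
    obtain ⟨μl, μh, _, _, rfl⟩ := exists_eq_jointPBin hP.real_stateL
    exact ⟨μl, μh, (feasibleBin_iff_isBeliefLaw hp0 hp1).2 hP, hint μl μh⟩

end TwoReceivers

/-- the simplified dual in the binary-state two-receiver case
(equation `eq:dual_value_2_receivers_simplified`). -/
theorem binary_dual_value
    (p : ℝ) (hp0 : 0 < p) (hp1 : p < 1)
    (vl vh : (Fin 2 → BeliefI) → ℝ)
    (hvb : ∃ C : ℝ, ∀ x, |vl x| ≤ C ∧ |vh x| ≤ C)
    (hvlusc : UpperSemicontinuous vl) (hvhusc : UpperSemicontinuous vh) :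
    ValBin p vl vh =
      sInf { r : ℝ | ∃ (Vl Vh : ℝ) (α : Fin 2 → BeliefI → ℝ),
        (∀ i : Fin 2, Continuous (α i)) ∧
        (∀ x : Fin 2 → BeliefI,
          vl x ≤ Vl + (1 - (x 0).1) * α 0 (x 0) + (1 - (x 1).1) * α 1 (x 1)) ∧
        (∀ x : Fin 2 → BeliefI,
          vh x ≤ Vh - (x 0).1 * α 0 (x 0) - (x 1).1 * α 1 (x 1)) ∧
        r = p * Vl + (1 - p) * Vh } := by
  obtain ⟨C, hC⟩ := hvb
  have hb : ∀ s x, |cond s vl vh x| ≤ C := Bool.forall_bool.2 ⟨fun x ↦ (hC x).2, fun x ↦ (hC x).1⟩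
  have husc : ∀ s, UpperSemicontinuous (cond s vl vh) := Bool.forall_bool.2 ⟨hvhusc, hvlusc⟩
  simpa [Fin.sum_univ_two, ← add_assoc, sub_add_eq_sub_sub] using
    (valBin_eq_sSup_isBeliefLaw hp0.le hp1.le hb fun s ↦ (husc s).measurable).trans
      (binary_dual_value_general hp0.le hp1.le _ ⟨C, hb⟩ husc)
end

section
/- Let Ω = {ℓ, h} be a binary state space with prior p = p(ℓ) ∈ (0,1) and n = 2 receivers, and let v^ℓ, v^h : [0,1]^2 → ℝ be continuous with v^ω(x_1,x_2) = v^ω(x_2,x_1) for all x_1, x_2 and both ω (beliefs identified with the probability of state ℓ). Define v̄ : [0,1] → ℝ by v̄(x) = x·v^ℓ(x,1) + (1−x)·v^h(x,0), and let cav[v̄](p) denote the supremum of ∫_{[0,1]} v̄ dλ over Borel probability measures λ on [0,1] with ∫ x dλ(x) = p. Suppose there exist real numbers V^ℓ, V^h and a continuous function α : [0,1] → ℝ such that p·V^ℓ + (1−p)·V^h = cav[v̄](p) and, for all x_1, x_2 ∈ [0,1], v^ℓ(x_1,x_2) ≤ V^ℓ + (1−x_1)·α(x_1) + (1−x_2)·α(x_2)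 and v^h(x_1,x_2) ≤ V^h − x_1·α(x_1) − x_2·α(x_2). Then the value of the persuasion problem equals cav[v̄](p), and it is attained by a full-information/partial-information policy that reveals the state to receiver 2. -/
open MeasureTheory

/-- The indirect utility `v̄(x) = x·v^ℓ(x,1) + (1−x)·v^h(x,0)` of a sender who reveals the
state to receiver 2 and induces belief `x` of receiver 1. -/
noncomputable def vbar (vl vh : (Fin 2 → BeliefI) → ℝ) (x : BeliefI) : ℝ :=
  x.1 * vl ![x, ⟨1, by norm_num⟩] + (1 - x.1) * vh ![x, ⟨0, by norm_num⟩]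

/-- `cav[v̄](p)`: the supremum of `∫ v̄ dλ` over distributions `λ` on `[0,1]` with mean `p`. -/
noncomputable def cavVbar (p : ℝ) (vl vh : (Fin 2 → BeliefI) → ℝ) : ℝ :=
  sSup { r : ℝ | ∃ lam : Measure BeliefI, IsProbabilityMeasure lam ∧
    (∫ x : BeliefI, x.1 ∂lam) = p ∧ r = ∫ x, vbar vl vh x ∂lam }

/-!
In terms of the marginals of receiver `i`, Bayes plausibility says that `p (1 - x) dμ^ℓ_i` and
`(1 - p) x dμ^h_i` are the same measure. The sum of the two dual constraints, weighted by `p` and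
`1 - p`, therefore loses its `α`-terms upon integration against a feasible pair, which bounds every
feasible payoff by `p V^ℓ + (1 - p) V^h = cav[v̄](p)`. Conversely, if `λ` is optimal in `cav[v̄](p)`
(one exists by weak compactness), revealing the state to receiver 2 and giving receiver 1 a belief
with law `x / p · λ` in state `ℓ` and `(1 - x) / (1 - p) · λ` in state `h` is feasible and has
payoff `∫ v̄ dλ`.
-/

section Densities

variable {X : Type*} [MeasurableSpace X] {μ : Measure X} {f : X → ℝ}

theorem integral_withDensity_ofReal_s17 (hf : Measurable f) (hf0 : ∀ x, 0 ≤ f x) (g : X → ℝ) :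
    ∫ x, g x ∂μ.withDensity (fun x => ENNReal.ofReal (f x)) = ∫ x, f x * g x ∂μ := by
  rw [integral_withDensity_eq_integral_toReal_smul hf.ennreal_ofReal (.of_forall (by simp))]
  simp only [ENNReal.toReal_ofReal (hf0 _), smul_eq_mul]

theorem integrable_withDensity_ofReal_iff (hf : Measurable f) (hf0 : ∀ x, 0 ≤ f x) {g : X → ℝ} :
    Integrable g (μ.withDensity fun x => ENNReal.ofReal (f x)) ↔
      Integrable (fun x => f x * g x) μ := by
  rw [integrable_withDensity_iff_integrable_smul' hf.ennreal_ofReal (.of_forall (by simp))]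
  simp only [ENNReal.toReal_ofReal (hf0 _), smul_eq_mul]

theorem isProbabilityMeasure_withDensity_ofReal (hf : Integrable f μ) (hf0 : ∀ x, 0 ≤ f x)
    (hf1 : ∫ x, f x ∂μ = 1) :
    IsProbabilityMeasure (μ.withDensity fun x => ENNReal.ofReal (f x)) where
  measure_univ := by
    rw [withDensity_apply _ .univ, Measure.restrict_univ,
      ← ofReal_integral_eq_lintegral_ofReal hf (.of_forall hf0), hf1, ENNReal.ofReal_one]

theorem withDensity_ofReal_eq_iff {ν : Measure X} {g : X → ℝ} (hf : Integrable f μ)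
    (hf0 : ∀ x, 0 ≤ f x) (hg : Integrable g ν) (hg0 : ∀ x, 0 ≤ g x) :
    (μ.withDensity fun x => ENNReal.ofReal (f x)) = (ν.withDensity fun x => ENNReal.ofReal (g x)) ↔
      ∀ A, MeasurableSet A → ∫ x in A, f x ∂μ = ∫ x in A, g x ∂ν := by
  rw [Measure.ext_iff]
  refine forall₂_congr fun A hA => ?_
  rw [withDensity_apply _ hA, withDensity_apply _ hA,
    ← ofReal_integral_eq_lintegral_ofReal hf.restrict (.of_forall hf0),
    ← ofReal_integral_eq_lintegral_ofReal hg.restrict (.of_forall hg0),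
    ENNReal.ofReal_eq_ofReal_iff (integral_nonneg hf0) (integral_nonneg hg0)]

end Densities

section ConditionalExpectation

variable {Ω : Type*} {m m0 : MeasurableSpace Ω} {P : Measure Ω} [IsFiniteMeasure P]

theorem comp_ae_eq_condExp_comap_iff {S : Type*} [MeasurableSpace S] {Y : Ω → S} (hY : Measurable Y)
    {f : S → ℝ} (hf : Measurable f) (hfY : Integrable (f ∘ Y) P) {g : Ω → ℝ} (hg : Integrable g P) :
    f ∘ Y =ᵐ[P] P[g | MeasurableSpace.comap Y inferInstance] ↔
      ∀ A, MeasurableSet A → ∫ z in Y ⁻¹' A, f (Y z) ∂P = ∫ z in Y ⁻¹' A, g z ∂P := by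
  refine ⟨fun h A hA => ?_, fun h => ?_⟩
  · rw [← setIntegral_condExp hY.comap_le hg ⟨A, hA, rfl⟩]
    exact integral_congr_ae (ae_restrict_of_ae h)
  · refine ae_eq_condExp_of_forall_setIntegral_eq hY.comap_le hg
      (fun _ _ _ => hfY.integrableOn) ?_
      (hf.comp (comap_measurable Y)).stronglyMeasurable.aestronglyMeasurable
    rintro _ ⟨A, hA, rfl⟩ -
    exact h A hA

theorem one_sub_ae_eq_condExp_indicator_compl (hm : m ≤ m0) {s : Set Ω} (hs : MeasurableSet s)
    {f : Ω → ℝ} (h : f =ᵐ[P] P[s.indicator fun _ => (1 : ℝ) | m]) :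
    (fun z => 1 - f z) =ᵐ[P] P[sᶜ.indicator fun _ => (1 : ℝ) | m] := by
  rw [Set.indicator_compl]
  filter_upwards [h, condExp_sub (μ := P) (integrable_const (1 : ℝ))
    ((integrable_const (1 : ℝ)).indicator hs) m] with z hz hsub
  rw [hsub, Pi.sub_apply, condExp_const hm, hz]

end ConditionalExpectation

theorem exists_isMaxOn_integral_of_integral_eq {X : Type*} [TopologicalSpace X] [T2Space X]
    [CompactSpace X] [MeasurableSpace X] [BorelSpace X] (f g : C(X, ℝ)) {c : ℝ}
    (hc : ∃ ν : ProbabilityMeasure X, ∫ x, g x ∂(ν : Measure X) = c) :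
    ∃ μ : ProbabilityMeasure X, ∫ x, g x ∂(μ : Measure X) = c ∧
      IsMaxOn (fun ν : ProbabilityMeasure X => ∫ x, f x ∂(ν : Measure X))
        {ν | ∫ x, g x ∂(ν : Measure X) = c} μ :=
  (isClosed_eq (ProbabilityMeasure.continuous_integral_continuousMap g)
    continuous_const).isCompact.exists_isMaxOn hc
      (ProbabilityMeasure.continuous_integral_continuousMap f).continuousOn

theorem integrable_of_continuous_of_compactSpace {X : Type*} [TopologicalSpace X] [CompactSpace X]
    [MeasurableSpace X] [OpensMeasurableSpace X] {μ : Measure X} [IsFiniteMeasureOnCompacts μ]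
    {f : X → ℝ} (hf : Continuous f) : Integrable f μ :=
  hf.integrable_of_hasCompactSupport (.of_compactSpace f)

theorem abs_one_sub_mul_le_of_half_le {t a K : ℝ} (ht : 1 / 2 ≤ t) (ht1 : t ≤ 1)
    (hl : -K ≤ (1 - t) * a) (hh : t * a ≤ K) : |(1 - t) * a| ≤ K := by
  refine abs_le.2 ⟨hl, ?_⟩
  rcases le_total 0 a with ha | ha
  · exact (mul_le_mul_of_nonneg_right (by linarith) ha).trans hh
  · linarith [mul_nonpos_of_nonneg_of_nonpos (sub_nonneg.2 ht1) ha]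

theorem abs_mul_le_of_le_half {t a K : ℝ} (ht0 : 0 ≤ t) (ht : t ≤ 1 / 2)
    (hl : -K ≤ (1 - t) * a) (hh : t * a ≤ K) : |t * a| ≤ K := by
  simpa using abs_one_sub_mul_le_of_half_le (t := 1 - t) (a := -a) (K := K)
    (by linarith) (by linarith) (by linarith) (by linarith)

/-- Bayes consistency of a receiver's belief laws `νl` and `νh` in the states `ℓ` and `h`, for the
prior `p` of `ℓ`. It is the identity `p (1 - x) dνl = (1 - p) x dνh`, the odds form of Bayes' rule,
which involves no conditional expectation. -/
def BayesConsistent (p : ℝ) (νl νh : Measure BeliefI) : Prop :=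
  (νl.withDensity fun x => ENNReal.ofReal (p * (1 - x.1))) =
    νh.withDensity fun x => ENNReal.ofReal ((1 - p) * x.1)

namespace BayesConsistent

variable {p : ℝ} {νl νh : Measure BeliefI}

theorem integral_mul_eq (h : BayesConsistent p νl νh) (hp0 : 0 ≤ p) (hp1 : p ≤ 1)
    (α : BeliefI → ℝ) :
    p * ∫ x, (1 - x.1) * α x ∂νl = (1 - p) * ∫ x, x.1 * α x ∂νh := by
  have key := congrArg (fun ν => ∫ x, α x ∂ν) h
  beta_reduce at key
  rw [integral_withDensity_ofReal_s17 (by fun_prop) fun x => mul_nonneg hp0 (sub_nonneg.2 x.2.2),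
    integral_withDensity_ofReal_s17 (by fun_prop) fun x => mul_nonneg (sub_nonneg.2 hp1) x.2.1] at key
  simpa only [mul_assoc, integral_const_mul] using key

theorem integrable_mul_iff (h : BayesConsistent p νl νh) (hp0 : 0 < p) (hp1 : p < 1)
    {α : BeliefI → ℝ} :
    Integrable (fun x => (1 - x.1) * α x) νl ↔ Integrable (fun x => x.1 * α x) νh := by
  have key := iff_of_eq (congrArg (fun ν => Integrable α ν) h)
  beta_reduce at key
  rw [integrable_withDensity_ofReal_iff (by fun_prop)
      fun x => mul_nonneg hp0.le (sub_nonneg.2 x.2.2),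
    integrable_withDensity_ofReal_iff (by fun_prop)
      fun x => mul_nonneg (sub_nonneg.2 hp1.le) x.2.1] at key
  simpa only [mul_assoc, integrable_const_mul_iff (Ne.isUnit hp0.ne'),
    integrable_const_mul_iff (Ne.isUnit (sub_pos.2 hp1).ne')] using key

theorem integrable_mul_of_bounds [IsFiniteMeasure νl] [IsFiniteMeasure νh]
    (h : BayesConsistent p νl νh) (hp0 : 0 < p) (hp1 : p < 1) {α : BeliefI → ℝ}
    (hα : Measurable α) {K : ℝ} (hl : ∀ x, -K ≤ (1 - x.1) * α x) (hh : ∀ x, x.1 * α x ≤ K) :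
    Integrable (fun x => (1 - x.1) * α x) νl := by
  -- The bounds give `|(1 - x) α x| ≤ K` only for `x ≥ 1/2`; for `x < 1/2` they give `|x α x| ≤ K`,
  -- and integrability is transferred from `νh`.
  let S : Set BeliefI := {x | 1 / 2 ≤ x.1}
  have hS : MeasurableSet S := measurableSet_le measurable_const measurable_subtype_coe
  have hK : 0 ≤ K := by simpa using hh 0
  have upper : Integrable (fun x => (1 - x.1) * S.indicator α x) νl := by
    refine .of_bound ((by fun_prop : Measurable fun x : BeliefI => 1 - x.1).mul
      (hα.indicator hS)).aestronglyMeasurable K (.of_forall fun x => ?_)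
    by_cases hx : x ∈ S
    · rw [Set.indicator_of_mem hx]
      exact abs_one_sub_mul_le_of_half_le hx x.2.2 (hl x) (hh x)
    · simpa [hx] using hK
  have lower : Integrable (fun x => x.1 * Sᶜ.indicator α x) νh := by
    refine .of_bound (measurable_subtype_coe.mul
      (hα.indicator hS.compl)).aestronglyMeasurable K (.of_forall fun x => ?_)
    by_cases hx : x ∈ S
    · simpa [hx] using hK
    · rw [Set.indicator_of_mem (Set.mem_compl hx)]
      exact abs_mul_le_of_le_half x.2.1 (not_le.1 hx).le (hl x) (hh x)
  refine (upper.add ((h.integrable_mul_iff hp0 hp1).2 lower)).congr (.of_forall fun x => ?_)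
  rw [Pi.add_apply, ← mul_add, ← Pi.add_apply, Set.indicator_self_add_compl]

end BayesConsistent

theorem bayesConsistent_withDensity {p : ℝ} (hp0 : 0 < p) (hp1 : p < 1) (lam : Measure BeliefI) :
    BayesConsistent p (lam.withDensity fun x => ENNReal.ofReal (x.1 / p))
      (lam.withDensity fun x => ENNReal.ofReal ((1 - x.1) / (1 - p))) := by
  have hq : 0 < 1 - p := sub_pos.2 hp1
  rw [BayesConsistent, ← withDensity_mul _ (by fun_prop) (by fun_prop),
    ← withDensity_mul _ (by fun_prop) (by fun_prop)]
  congr 1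
  ext1 x
  simp only [Pi.mul_apply]
  rw [← ENNReal.ofReal_mul (div_nonneg x.2.1 hp0.le),
    ← ENNReal.ofReal_mul (div_nonneg (sub_nonneg.2 x.2.2) hq.le)]
  congr 1
  field_simp

theorem bayesConsistent_dirac (p : ℝ) :
    BayesConsistent p (Measure.dirac 1) (Measure.dirac 0) := by
  have hl : (fun x : BeliefI => ENNReal.ofReal (p * (1 - x.1))) =ᵐ[Measure.dirac 1] 0 := by
    simp [ae_dirac_eq, Filter.EventuallyEq]
  have hh : (fun x : BeliefI => ENNReal.ofReal ((1 - p) * x.1)) =ᵐ[Measure.dirac 0] 0 := by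
    simp [ae_dirac_eq, Filter.EventuallyEq]
  rw [BayesConsistent, withDensity_congr_ae hl, withDensity_congr_ae hh, withDensity_zero,
    withDensity_zero]

section Feasibility

variable {p : ℝ} {μl μh : Measure (Fin 2 → BeliefI)} [IsFiniteMeasure μl]
  [IsFiniteMeasure μh]

instance isFiniteMeasure_jointPBin : IsFiniteMeasure (jointPBin p μl μh) := by
  have := Measure.smul_finite ((Measure.dirac StateL).prod μl) (ENNReal.ofReal_ne_top (r := p))
  have := Measure.smul_finite ((Measure.dirac StateH).prod μh) (ENNReal.ofReal_ne_top (r := 1 - p))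
  exact isFiniteMeasureAdd

theorem map_belief_jointPBin (i : Fin 2) :
    (jointPBin p μl μh).map (fun z => z.2 i) =
      ENNReal.ofReal p • μl.map (fun x => x i) +
        ENNReal.ofReal (1 - p) • μh.map (fun x => x i) := by
  rw [jointPBin, Measure.map_add _ _ (by fun_prop), Measure.map_smul, Measure.map_smul,
    Measure.dirac_prod, Measure.dirac_prod, Measure.map_map (by fun_prop) (by fun_prop),
    Measure.map_map (by fun_prop) (by fun_prop)]
  rfl

theorem setIntegral_belief_jointPBin (hp0 : 0 ≤ p) (hp1 : p ≤ 1) (i : Fin 2) {A : Set BeliefI}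
    (hA : MeasurableSet A) :
    ∫ z in (fun z => z.2 i) ⁻¹' A, (z.2 i).1 ∂jointPBin p μl μh =
      p * ∫ x in A, x.1 ∂μl.map (fun x => x i) +
        (1 - p) * ∫ x in A, x.1 ∂μh.map (fun x => x i) := by
  have hint (ν : Measure BeliefI) [IsFiniteMeasure ν] : IntegrableOn (fun x => x.1) A ν :=
    (integrable_of_continuous_of_compactSpace continuous_subtype_val).integrableOn
  rw [← setIntegral_map (g := fun z : Bool × (Fin 2 → BeliefI) => z.2 i) (f := Subtype.val) hA
      (by fun_prop) (by fun_prop), map_belief_jointPBin,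
    Measure.restrict_add, Measure.restrict_smul, Measure.restrict_smul,
    integral_add_measure ((hint _).smul_measure ENNReal.ofReal_ne_top)
      ((hint _).smul_measure ENNReal.ofReal_ne_top),
    integral_smul_measure, integral_smul_measure, ENNReal.toReal_ofReal hp0,
    ENNReal.toReal_ofReal (sub_nonneg.2 hp1), smul_eq_mul, smul_eq_mul]

theorem setIntegral_indicator_stateL_jointPBin (hp0 : 0 ≤ p) (i : Fin 2) {A : Set BeliefI}
    (hA : MeasurableSet A) :
    ∫ z in (fun z => z.2 i) ⁻¹' A, {z | z.1 = StateL}.indicator (fun _ => (1 : ℝ)) z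
      ∂jointPBin p μl μh = p * (μl.map fun x => x i).real A := by
  have hprod : (fun z : Bool × (Fin 2 → BeliefI) => z.2 i) ⁻¹' A ∩ {z | z.1 = StateL} =
      {StateL} ×ˢ ((fun x => x i) ⁻¹' A) := by
    ext z; simp [and_comm]
  rw [setIntegral_indicator (measurableSet_eq_fun (by fun_prop) (by fun_prop)), hprod,
    setIntegral_const, smul_eq_mul, mul_one, measureReal_def, measureReal_def, jointPBin,
    Measure.map_apply (by fun_prop) hA]
  simp [Measure.prod_prod, ENNReal.toReal_ofReal hp0]

theorem belief_ae_eq_condExp_stateL_iff (hp0 : 0 ≤ p) (hp1 : p ≤ 1) (i : Fin 2) :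
    (fun z => (z.2 i).1) =ᵐ[jointPBin p μl μh] (jointPBin p μl μh)[
        {z : Bool × (Fin 2 → BeliefI) | z.1 = StateL}.indicator fun _ => (1 : ℝ) |
        MeasurableSpace.comap (fun z => z.2 i) inferInstance] ↔
      BayesConsistent p (μl.map fun x => x i) (μh.map fun x => x i) := by
  have hint {ν : Measure BeliefI} [IsFiniteMeasure ν] {f : BeliefI → ℝ} (hf : Continuous f) :
      Integrable f ν := integrable_of_continuous_of_compactSpace hf
  rw [BayesConsistent, withDensity_ofReal_eq_iff (hint (by fun_prop))
    (fun x => mul_nonneg hp0 (sub_nonneg.2 x.2.2)) (hint (by fun_prop))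
    (fun x => mul_nonneg (sub_nonneg.2 hp1) x.2.1)]
  refine (comp_ae_eq_condExp_comap_iff (f := Subtype.val) (by fun_prop) (by fun_prop) ?_
    ((integrable_const _).indicator
      (measurableSet_eq_fun (by fun_prop) (by fun_prop)))).trans ?_
  · exact Integrable.of_bound (by fun_prop) 1 (.of_forall fun z => by
      simpa [abs_of_nonneg (z.2 i).2.1] using (z.2 i).2.2)
  refine forall₂_congr fun A hA => ?_
  rw [setIntegral_belief_jointPBin hp0 hp1 i hA, setIntegral_indicator_stateL_jointPBin hp0 i hA,
    integral_const_mul, integral_const_mul,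
    integral_sub (integrable_const _) (hint continuous_subtype_val).integrableOn,
    setIntegral_const, smul_eq_mul, mul_one, mul_sub]
  constructor <;> intro h <;> linarith

end Feasibility

theorem feasibleBin_iff_bayesConsistent {p : ℝ} {μl μh : Measure (Fin 2 → BeliefI)}
    [IsProbabilityMeasure μl] [IsProbabilityMeasure μh] (hp0 : 0 ≤ p) (hp1 : p ≤ 1) :
    FeasibleBin p μl μh ↔
      ∀ i, BayesConsistent p (μl.map fun x => x i) (μh.map fun x => x i) := by
  have hcompl : {z : Bool × (Fin 2 → BeliefI) | z.1 = StateH} = {z | z.1 = StateL}ᶜ := by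
    ext z; simp
  refine ⟨fun h i => (belief_ae_eq_condExp_stateL_iff hp0 hp1 i).1 (h.2.2 i).1,
    fun h => ⟨‹_›, ‹_›, fun i => ?_⟩⟩
  have hL := (belief_ae_eq_condExp_stateL_iff hp0 hp1 i).2 (h i)
  refine ⟨hL, ?_⟩
  rw [hcompl]
  have hbelief : Measurable fun z : Bool × (Fin 2 → BeliefI) => z.2 i := by fun_prop
  exact one_sub_ae_eq_condExp_indicator_compl hbelief.comap_le
    (measurableSet_eq_fun measurable_fst measurable_const) hL

/-- Feasibility of `(Vl, Vh, α)` in the dual of the persuasion problem, with the same multiplier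
`α` for both receivers. -/
structure IsDualFeasible (vl vh : (Fin 2 → BeliefI) → ℝ) (Vl Vh : ℝ) (α : BeliefI → ℝ) : Prop where
  low : ∀ x, vl x ≤ Vl + (1 - (x 0).1) * α (x 0) + (1 - (x 1).1) * α (x 1)
  high : ∀ x, vh x ≤ Vh - (x 0).1 * α (x 0) - (x 1).1 * α (x 1)

namespace IsDualFeasible

variable {vl vh : (Fin 2 → BeliefI) → ℝ} {Vl Vh : ℝ} {α : BeliefI → ℝ}

theorem exists_bounds (h : IsDualFeasible vl vh Vl Vh α) (hvl : BddBelow (Set.range vl))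
    (hvh : BddBelow (Set.range vh)) :
    ∃ K : ℝ, (∀ x, -K ≤ (1 - x.1) * α x) ∧ ∀ x, x.1 * α x ≤ K := by
  obtain ⟨a, ha⟩ := hvl
  obtain ⟨b, hb⟩ := hvh
  refine ⟨max ((Vl - a) / 2) ((Vh - b) / 2), fun x => ?_, fun x => ?_⟩
  · have hdiag := (ha ⟨_, rfl⟩).trans (h.low fun _ => x)
    linarith [le_max_left ((Vl - a) / 2) ((Vh - b) / 2)]
  · have hdiag := (hb ⟨_, rfl⟩).trans (h.high fun _ => x)
    linarith [le_max_right ((Vl - a) / 2) ((Vh - b) / 2)]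

theorem payoff_le {p : ℝ} {μl μh : Measure (Fin 2 → BeliefI)} (h : IsDualFeasible vl vh Vl Vh α)
    (hp0 : 0 < p) (hp1 : p < 1) (hμ : FeasibleBin p μl μh) (hvl : Integrable vl μl)
    (hvh : Integrable vh μh) (hvlb : BddBelow (Set.range vl)) (hvhb : BddBelow (Set.range vh))
    (hα : Measurable α) :
    p * ∫ x, vl x ∂μl + (1 - p) * ∫ x, vh x ∂μh ≤ p * Vl + (1 - p) * Vh := by
  obtain ⟨K, hKl, hKh⟩ := h.exists_bounds hvlb hvhb
  have : IsProbabilityMeasure μl := hμ.1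
  have : IsProbabilityMeasure μh := hμ.2.1
  have bayes := (feasibleBin_iff_bayesConsistent hp0.le hp1.le).1 hμ
  have intl (i) : Integrable (fun x => (1 - (x i).1) * α (x i)) μl :=
    ((bayes i).integrable_mul_of_bounds hp0 hp1 hα hKl hKh).comp_measurable (by fun_prop)
  have inth (i) : Integrable (fun x => (x i).1 * α (x i)) μh :=
    (((bayes i).integrable_mul_iff hp0 hp1).1 <|
      (bayes i).integrable_mul_of_bounds hp0 hp1 hα hKl hKh).comp_measurable (by fun_prop)
  have cancel (i) : p * ∫ x, (1 - (x i).1) * α (x i) ∂μl =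
      (1 - p) * ∫ x, (x i).1 * α (x i) ∂μh := by
    have := (bayes i).integral_mul_eq hp0.le hp1.le α
    rwa [integral_map (measurable_pi_apply i).aemeasurable (by fun_prop),
      integral_map (measurable_pi_apply i).aemeasurable (by fun_prop)] at this
  have boundl : ∫ x, vl x ∂μl ≤ Vl + ∫ x, (1 - (x 0).1) * α (x 0) ∂μl
      + ∫ x, (1 - (x 1).1) * α (x 1) ∂μl := by
    have hVl0 := (integrable_const Vl).add (intl 0)
    refine (integral_mono hvl (hVl0.add (intl 1)) h.low).trans_eq ?_
    rw [integral_add' hVl0 (intl 1), integral_add' (integrable_const Vl) (intl 0)]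
    simp
  have boundh : ∫ x, vh x ∂μh ≤ Vh - ∫ x, (x 0).1 * α (x 0) ∂μh
      - ∫ x, (x 1).1 * α (x 1) ∂μh := by
    have hVh0 := (integrable_const Vh).sub (inth 0)
    refine (integral_mono hvh (hVh0.sub (inth 1)) h.high).trans_eq ?_
    rw [integral_sub' hVh0 (inth 1), integral_sub' (integrable_const Vh) (inth 0)]
    simp
  have weightedl := mul_le_mul_of_nonneg_left boundl hp0.le
  have weightedh := mul_le_mul_of_nonneg_left boundh (sub_nonneg.2 hp1.le)
  linarith [cancel 0, cancel 1]

end IsDualFeasible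

theorem continuous_vbar {vl vh : (Fin 2 → BeliefI) → ℝ} (hvl : Continuous vl)
    (hvh : Continuous vh) : Continuous (vbar vl vh) := by
  unfold vbar
  fun_prop

theorem exists_integral_vbar_eq_cavVbar {p : ℝ} (hp0 : 0 ≤ p) (hp1 : p ≤ 1)
    {vl vh : (Fin 2 → BeliefI) → ℝ} (hvl : Continuous vl) (hvh : Continuous vh) :
    ∃ lam : Measure BeliefI, IsProbabilityMeasure lam ∧ ∫ x : BeliefI, x.1 ∂lam = p ∧
      ∫ x, vbar vl vh x ∂lam = cavVbar p vl vh := by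
  have hdirac : ∫ x : BeliefI, x.1 ∂Measure.dirac (⟨p, hp0, hp1⟩ : BeliefI) = p :=
    integral_dirac _ _
  obtain ⟨lam, hmean, hmax⟩ := exists_isMaxOn_integral_of_integral_eq
    ⟨vbar vl vh, continuous_vbar hvl hvh⟩ ⟨Subtype.val, continuous_subtype_val⟩
    ⟨⟨.dirac ⟨p, hp0, hp1⟩, inferInstance⟩, hdirac⟩
  refine ⟨lam, inferInstance, hmean, Eq.symm <| IsGreatest.csSup_eq
    ⟨⟨lam, inferInstance, hmean, rfl⟩, ?_⟩⟩
  rintro _ ⟨ν, hν, hνmean, rfl⟩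
  exact hmax (a := ⟨ν, hν⟩) hνmean

/-- The law of the belief pair `(x, c)`, where the second belief is the constant `c` and the first
belief `x` has density `d` with respect to `lam`. -/
noncomputable def pinnedLaw (lam : Measure BeliefI) (d : BeliefI → ℝ) (c : BeliefI) :
    Measure (Fin 2 → BeliefI) :=
  (lam.withDensity fun x => ENNReal.ofReal (d x)).map fun x => ![x, c]

section PinnedLaw

variable {lam : Measure BeliefI} {d : BeliefI → ℝ} {c : BeliefI}

theorem measurable_vec_pair (c : BeliefI) : Measurable fun x : BeliefI => ![x, c] :=
  Continuous.measurable (by fun_prop)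

theorem integral_pinnedLaw (hd : Measurable d) (hd0 : ∀ x, 0 ≤ d x) {f : (Fin 2 → BeliefI) → ℝ}
    (hf : Measurable f) : ∫ x, f x ∂pinnedLaw lam d c = ∫ x, d x * f ![x, c] ∂lam := by
  rw [pinnedLaw, integral_map (measurable_vec_pair c).aemeasurable hf.aestronglyMeasurable,
    integral_withDensity_ofReal_s17 hd hd0]

theorem isProbabilityMeasure_pinnedLaw (hd : Integrable d lam) (hd0 : ∀ x, 0 ≤ d x)
    (hd1 : ∫ x, d x ∂lam = 1) : IsProbabilityMeasure (pinnedLaw lam d c) :=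
  have := isProbabilityMeasure_withDensity_ofReal hd hd0 hd1
  Measure.isProbabilityMeasure_map (measurable_vec_pair c).aemeasurable

theorem map_fst_pinnedLaw :
    (pinnedLaw lam d c).map (fun x => x 0) = lam.withDensity fun x => ENNReal.ofReal (d x) := by
  rw [pinnedLaw, Measure.map_map (measurable_pi_apply 0) (measurable_vec_pair c)]
  exact Measure.map_id

theorem map_snd_pinnedLaw [IsProbabilityMeasure (pinnedLaw lam d c)] :
    (pinnedLaw lam d c).map (fun x => x 1) = Measure.dirac c := by
  have hmass : (lam.withDensity fun x => ENNReal.ofReal (d x)) Set.univ = 1 := by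
    rw [← measure_univ (μ := pinnedLaw lam d c), pinnedLaw,
      Measure.map_apply (measurable_vec_pair c) .univ, Set.preimage_univ]
  rw [pinnedLaw, Measure.map_map (measurable_pi_apply 1) (measurable_vec_pair c)]
  exact (Measure.map_const _ c).trans (by rw [hmass, one_smul])

theorem pinnedLaw_snd_ne_eq_zero : pinnedLaw lam d c {x | (x 1).1 ≠ c.1} = 0 := by
  have hs : MeasurableSet {x : Fin 2 → BeliefI | (x 1).1 ≠ c.1} :=
    (measurableSet_eq_fun (by fun_prop) measurable_const).compl
  rw [pinnedLaw, Measure.map_apply (measurable_vec_pair c) hs]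
  simp

end PinnedLaw

/-- Conditionally on `ℓ`, the joint law of the beliefs under the policy of full information for
receiver 2 and partial information, with unconditional belief law `lam`, for receiver 1. By Bayes'
rule, the belief law of receiver 1 in state `ℓ` has density `x / p` with respect to `lam`. -/
noncomputable def fullPartialPolicyL (p : ℝ) (lam : Measure BeliefI) : Measure (Fin 2 → BeliefI) :=
  pinnedLaw lam (fun x => x.1 / p) 1

/-- The counterpart of `fullPartialPolicyL` in state `h`, where the density is
`(1 - x) / (1 - p)`. -/
noncomputable def fullPartialPolicyH (p : ℝ) (lam : Measure BeliefI) : Measure (Fin 2 → BeliefI) :=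
  pinnedLaw lam (fun x => (1 - x.1) / (1 - p)) 0

section FullPartialPolicy

variable {p : ℝ} {lam : Measure BeliefI}

theorem isProbabilityMeasure_fullPartialPolicyL [IsFiniteMeasure lam] (hp0 : 0 < p)
    (hmean : ∫ x, x.1 ∂lam = p) :
    IsProbabilityMeasure (fullPartialPolicyL p lam) :=
  isProbabilityMeasure_pinnedLaw (integrable_of_continuous_of_compactSpace (by fun_prop))
    (fun x => div_nonneg x.2.1 hp0.le) (by rw [integral_div, hmean, div_self hp0.ne'])

theorem isProbabilityMeasure_fullPartialPolicyH [IsProbabilityMeasure lam] (hp1 : p < 1)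
    (hmean : ∫ x, x.1 ∂lam = p) :
    IsProbabilityMeasure (fullPartialPolicyH p lam) := by
  refine isProbabilityMeasure_pinnedLaw (integrable_of_continuous_of_compactSpace (by fun_prop))
    (fun x => div_nonneg (sub_nonneg.2 x.2.2) (sub_nonneg.2 hp1.le)) ?_
  rw [integral_div, integral_sub (integrable_const _)
    (integrable_of_continuous_of_compactSpace continuous_subtype_val), hmean, integral_const,
    probReal_univ, one_smul, div_self (sub_pos.2 hp1).ne']

theorem feasibleBin_fullPartialPolicy [IsProbabilityMeasure lam] (hp0 : 0 < p) (hp1 : p < 1)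
    (hmean : ∫ x, x.1 ∂lam = p) :
    FeasibleBin p (fullPartialPolicyL p lam) (fullPartialPolicyH p lam) := by
  have hl := isProbabilityMeasure_fullPartialPolicyL hp0 hmean
  have hh := isProbabilityMeasure_fullPartialPolicyH hp1 hmean
  refine (feasibleBin_iff_bayesConsistent hp0.le hp1.le).2 (Fin.forall_fin_two.2 ⟨?_, ?_⟩)
  · rw [fullPartialPolicyL, fullPartialPolicyH, map_fst_pinnedLaw, map_fst_pinnedLaw]
    exact bayesConsistent_withDensity hp0 hp1 lam
  · rw [fullPartialPolicyL] at hl ⊢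
    rw [fullPartialPolicyH] at hh ⊢
    rw [map_snd_pinnedLaw, map_snd_pinnedLaw]
    exact bayesConsistent_dirac p

theorem payoff_fullPartialPolicy [IsFiniteMeasure lam] (hp0 : 0 < p) (hp1 : p < 1)
    {vl vh : (Fin 2 → BeliefI) → ℝ} (hvl : Continuous vl) (hvh : Continuous vh) :
    p * ∫ x, vl x ∂fullPartialPolicyL p lam + (1 - p) * ∫ x, vh x ∂fullPartialPolicyH p lam =
      ∫ x, vbar vl vh x ∂lam := by
  have hq : 0 < 1 - p := sub_pos.2 hp1
  rw [fullPartialPolicyL, fullPartialPolicyH,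
    integral_pinnedLaw (by fun_prop) (fun x => div_nonneg x.2.1 hp0.le) hvl.measurable,
    integral_pinnedLaw (by fun_prop) (fun x => div_nonneg (sub_nonneg.2 x.2.2) hq.le)
      hvh.measurable,
    ← integral_const_mul, ← integral_const_mul,
    ← integral_add (integrable_of_continuous_of_compactSpace (by fun_prop))
      (integrable_of_continuous_of_compactSpace (by fun_prop))]
  congr 1
  ext1 x
  field_simp
  rfl

end FullPartialPolicy

theorem full_info_partial_info_optimal_general
    (p : ℝ) (hp0 : 0 < p) (hp1 : p < 1)
    (vl vh : (Fin 2 → BeliefI) → ℝ) (hvlc : Continuous vl) (hvhc : Continuous vh)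
    (Vl Vh : ℝ) (α : BeliefI → ℝ) (hα : Measurable α)
    (hV : p * Vl + (1 - p) * Vh = cavVbar p vl vh)
    (hdual : IsDualFeasible vl vh Vl Vh α) :
    ValBin p vl vh = cavVbar p vl vh ∧
    ∃ μl μh : Measure (Fin 2 → BeliefI), FeasibleBin p μl μh ∧
      p * (∫ x, vl x ∂μl) + (1 - p) * (∫ x, vh x ∂μh) = cavVbar p vl vh ∧
      μl {x : Fin 2 → BeliefI | (x 1).1 ≠ 1} = 0 ∧
      μh {x : Fin 2 → BeliefI | (x 1).1 ≠ 0} = 0 := by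
  obtain ⟨lam, _, hmean, hopt⟩ := exists_integral_vbar_eq_cavVbar hp0.le hp1.le hvlc hvhc
  have hfeas := feasibleBin_fullPartialPolicy hp0 hp1 hmean
  have hpay := (payoff_fullPartialPolicy (lam := lam) hp0 hp1 hvlc hvhc).trans hopt
  refine ⟨IsGreatest.csSup_eq ⟨⟨_, _, hfeas, hpay.symm⟩, ?_⟩, _, _, hfeas, hpay,
    pinnedLaw_snd_ne_eq_zero, pinnedLaw_snd_ne_eq_zero⟩
  rintro _ ⟨μl, μh, hμ, rfl⟩
  have : IsProbabilityMeasure μl := hμ.1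
  have : IsProbabilityMeasure μh := hμ.2.1
  rw [← hV]
  exact hdual.payoff_le hp0 hp1 hμ (integrable_of_continuous_of_compactSpace hvlc)
    (integrable_of_continuous_of_compactSpace hvhc) (isCompact_range hvlc).bddBelow
    (isCompact_range hvhc).bddBelow hα

/-- a sufficient condition for the optimality of a
full-information/partial-information policy
(Proposition `prop_sufficient_full_info_partial_info_optimality`). -/
theorem full_info_partial_info_optimal
    (p : ℝ) (hp0 : 0 < p) (hp1 : p < 1)
    (vl vh : (Fin 2 → BeliefI) → ℝ)
    (hvlc : Continuous vl) (hvhc : Continuous vh)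
    (hvlsym : ∀ x : Fin 2 → BeliefI, vl (x ∘ (Equiv.swap 0 1)) = vl x)
    (hvhsym : ∀ x : Fin 2 → BeliefI, vh (x ∘ (Equiv.swap 0 1)) = vh x)
    (Vl Vh : ℝ) (α : BeliefI → ℝ) (hαc : Continuous α)
    (hV : p * Vl + (1 - p) * Vh = cavVbar p vl vh)
    (hdl : ∀ x : Fin 2 → BeliefI,
      vl x ≤ Vl + (1 - (x 0).1) * α (x 0) + (1 - (x 1).1) * α (x 1))
    (hdh : ∀ x : Fin 2 → BeliefI,
      vh x ≤ Vh - (x 0).1 * α (x 0) - (x 1).1 * α (x 1)) :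
    ValBin p vl vh = cavVbar p vl vh ∧
    ∃ μl μh : Measure (Fin 2 → BeliefI), FeasibleBin p μl μh ∧
      p * (∫ x, vl x ∂μl) + (1 - p) * (∫ x, vh x ∂μh) = cavVbar p vl vh ∧
      -- the optimal policy reveals the state to receiver 2 (index 1):
      μl {x : Fin 2 → BeliefI | (x 1).1 ≠ 1} = 0 ∧
      μh {x : Fin 2 → BeliefI | (x 1).1 ≠ 0} = 0 := by
  exact full_info_partial_info_optimal_general p hp0 hp1 vl vh hvlc hvhc Vl Vh α
    hαc.measurable hV ⟨hdl, hdh⟩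
end
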